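/- arXiv:1504.06731 — 5 statements merged into one kernel-verified Lean document; each statement's English description precedes it below -/
import Mathlib

section
/- For every n ≥ 2, the minimum size of a deterministic U_2-circuit computing the parity function Parity_n equals 3(n-1); that is, size^dc(Parity_n) = 3(n-1). -/
/-- A Boolean circuit with input index type `ι`. It is given as a straight-line
program: each gate has fan-in 2, and each of its two incoming wires comes from
an input node (a variable in `ι` or a Boolean constant) or from an earlier gate.
The output is a designated node (an input node or a gate). -/
structure Circuit (ι : Type) : Type where
  size : ℕ
  gate : Fin size → Bool → Bool → Bool
  in1 : (g : Fin size) → (ι ⊕ Bool) ⊕ Fin g.val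
  in2 : (g : Fin size) → (ι ⊕ Bool) ⊕ Fin g.val
  out : (ι ⊕ Bool) ⊕ Fin size

namespace Circuit

variable {ι : Type}

/-- The value carried by the output of gate `g` on input assignment `x`. -/
def nodeVal (C : Circuit ι) (x : ι → Bool) : (g : Fin C.size) → Bool
  | g =>
    C.gate g
      (match C.in1 g with
       | .inl (.inl i) => x i
       | .inl (.inr b) => b
       | .inr h => C.nodeVal x ⟨h.val, h.isLt.trans g.isLt⟩)
      (match C.in2 g with
       | .inl (.inl i) => x i
       | .inl (.inr b) => b
       | .inr h => C.nodeVal x ⟨h.val, h.isLt.trans g.isLt⟩)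
  termination_by g => g.val
  decreasing_by all_goals exact h.isLt

/-- The output value of the circuit on input assignment `x`. -/
def eval (C : Circuit ι) (x : ι → Bool) : Bool :=
  match C.out with
  | .inl (.inl i) => x i
  | .inl (.inr b) => b
  | .inr g => C.nodeVal x g

end Circuit

/-- A two-input Boolean function is in `U₂` iff it is neither XOR nor XNOR. -/
def IsU2 (f : Bool → Bool → Bool) : Prop :=
  f ≠ xor ∧ f ≠ fun a b => !(xor a b)

/-- A `U₂`-circuit: every gate is labeled by a function in `U₂`. -/
def Circuit.IsU2Circuit {ι : Type} (C : Circuit ι) : Prop :=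
  ∀ g, IsU2 (C.gate g)

/-- A deterministic circuit computes `f` if it outputs `f x` on every input `x`. -/
def Circuit.Computes {n : ℕ} (C : Circuit (Fin n)) (f : (Fin n → Bool) → Bool) : Prop :=
  ∀ x, C.eval x = f x

/-- A nondeterministic circuit (with `n` actual inputs and `m` guess inputs)
computes `f` if for every actual input `x`, `f x = 1` iff some setting of the
guess inputs makes the circuit output `1`. -/
def Circuit.ComputesND {n m : ℕ} (C : Circuit (Fin n ⊕ Fin m))
    (f : (Fin n → Bool) → Bool) : Prop :=
  ∀ x, f x = true ↔ ∃ y : Fin m → Bool, C.eval (Sum.elim x y) = true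

/-- `sizeDC f`: the size of the smallest deterministic `U₂`-circuit computing `f`. -/
noncomputable def sizeDC {n : ℕ} (f : (Fin n → Bool) → Bool) : ℕ :=
  sInf {s | ∃ C : Circuit (Fin n), C.IsU2Circuit ∧ C.Computes f ∧ C.size = s}

/-- `sizeNDC f`: the size of the smallest nondeterministic `U₂`-circuit computing `f`. -/
noncomputable def sizeNDC {n : ℕ} (f : (Fin n → Bool) → Bool) : ℕ :=
  sInf {s | ∃ m : ℕ, ∃ C : Circuit (Fin n ⊕ Fin m),
    C.IsU2Circuit ∧ C.ComputesND f ∧ C.size = s}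

/-- `Parity_n`. -/
def parity (n : ℕ) (x : Fin n → Bool) : Bool :=
  decide ((∑ i, (x i).toNat) % 2 = 1)

namespace ParLB

set_option linter.unusedSectionVars false
set_option linter.unusedSimpArgs false

variable {ι : Type} [DecidableEq ι]

/-- xor with a constant -/
def neg (s : Bool) (f : (ι → Bool) → Bool) : (ι → Bool) → Bool := fun x => xor s (f x)

theorem neg_neg' (s t : Bool) (f : (ι → Bool) → Bool) : neg s (neg t f) = neg (xor s t) f := by
  funext x; simp [neg, Bool.xor_assoc]

theorem neg_swap {s : Bool} {f g : (ι → Bool) → Bool} (h : f = neg s g) : g = neg s f := by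
  subst h; funext x; simp [neg]

def var (i : ι) : (ι → Bool) → Bool := fun x => x i

def cst (s : Bool) : (ι → Bool) → Bool := fun _ => s

def LitP (V : Finset ι) (G : Finset ℕ) (v : ℕ → (ι → Bool) → Bool) (m : ℕ)
    (f : (ι → Bool) → Bool) : Prop :=
  (∃ s, f = cst s) ∨ (∃ i ∈ V, ∃ s, f = neg s (var i)) ∨ (∃ h ∈ G, h < m ∧ ∃ s, f = neg s (v h))

def comb (r : Bool) (a b : (ι → Bool) → Bool) : (ι → Bool) → Bool := fun x => xor r (a x && b x)

def Valid (V : Finset ι) (G : Finset ℕ) (v : ℕ → (ι → Bool) → Bool) : Prop :=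
  ∀ g ∈ G, ∃ a b r, LitP V G v g a ∧ LitP V G v g b ∧ v g = comb r a b

def pV (V : Finset ι) (x : ι → Bool) : Bool := decide ((∑ i ∈ V, (x i).toNat) % 2 = 1)

theorem LitP.neg {V : Finset ι} {G v m f} (h : LitP V G v m f) (s : Bool) :
    LitP V G v m (neg s f) := by
  rcases h with ⟨t, rfl⟩ | ⟨i, hi, t, rfl⟩ | ⟨h, hh, hm, t, rfl⟩
  · exact Or.inl ⟨xor s t, rfl⟩
  · exact Or.inr (Or.inl ⟨i, hi, xor s t, neg_neg' _ _ _⟩)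
  · exact Or.inr (Or.inr ⟨h, hh, hm, xor s t, neg_neg' _ _ _⟩)

theorem LitP.mono {V : Finset ι} {G v m m' f} (h : LitP V G v m f) (hm : m ≤ m') :
    LitP V G v m' f := by
  rcases h with h | h | ⟨h, hh, hm1, t, rfl⟩
  · exact Or.inl h
  · exact Or.inr (Or.inl h)
  · exact Or.inr (Or.inr ⟨h, hh, by omega, t, rfl⟩)

theorem lit_cst {V : Finset ι} {G v m} (s) : LitP V G v m (cst s) := Or.inl ⟨s, rfl⟩

theorem lit_var {V : Finset ι} {G v m} {i} (hi : i ∈ V) (s) : LitP V G v m (neg s (var i)) :=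
  Or.inr (Or.inl ⟨i, hi, s, rfl⟩)

theorem comb_comm (r) (a b : (ι → Bool) → Bool) : comb r a b = comb r b a := by
  funext x; simp [comb, Bool.and_comm]

theorem lit_comb_cst {V : Finset ι} {G v m} {b} (hb : LitP V G v m b) (r s) :
    LitP V G v m (comb r (cst s) b) := by
  cases s
  · have : comb r (cst false) b = cst r := by funext x; simp [comb, cst]
    rw [this]; exact lit_cst _
  · have : comb r (cst true) b = ParLB.neg r b := by funext x; simp [comb, cst, ParLB.neg]
    rw [this]; exact hb.neg _

theorem lit_sdiff {V : Finset ι} {G R : Finset ℕ} {v}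
    (hR : ∀ g ∈ R, LitP V G v g (v g)) :
    ∀ m f, LitP V G v m f → LitP V (G \ R) v m f := by
  intro m
  induction m using Nat.strong_induction_on with
  | _ m ih =>
    intro f hf
    rcases hf with h | h | ⟨h, hh, hm, s, rfl⟩
    · exact Or.inl h
    · exact Or.inr (Or.inl h)
    · by_cases hr : h ∈ R
      · exact ((ih h hm _ (hR h hr)).mono hm.le).neg s
      · exact Or.inr (Or.inr ⟨h, by simp [hh, hr], hm, s, rfl⟩)

theorem valid_sdiff {V : Finset ι} {G R : Finset ℕ} {v} (hV : Valid V G v)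
    (hR : ∀ g ∈ R, LitP V G v g (v g)) : Valid V (G \ R) v := by
  intro g hg
  obtain ⟨a, b, r, ha, hb, h⟩ := hV g (Finset.mem_sdiff.1 hg).1
  exact ⟨a, b, r, lit_sdiff hR _ _ ha, lit_sdiff hR _ _ hb, h⟩

def res (i : ι) (c : Bool) (f : (ι → Bool) → Bool) : (ι → Bool) → Bool :=
  fun x => f (Function.update x i c)

theorem res_neg (i : ι) (c s) (f : (ι → Bool) → Bool) : res i c (neg s f) = neg s (res i c f) := rfl

theorem res_comb (i : ι) (c r) (a b : (ι → Bool) → Bool) :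
    res i c (comb r a b) = comb r (res i c a) (res i c b) := rfl

theorem res_var (i : ι) (c) : res i c (var i) = cst c := by funext x; simp [res, var, cst]

theorem lit_res {V : Finset ι} {G v m f} (i : ι) (c) (h : LitP V G v m f) :
    LitP (V.erase i) G (fun h => res i c (v h)) m (res i c f) := by
  rcases h with ⟨t, rfl⟩ | ⟨j, hj, t, rfl⟩ | ⟨h, hh, hm, t, rfl⟩
  · exact Or.inl ⟨t, rfl⟩
  · by_cases hij : j = i
    · subst hij
      rw [res_neg, res_var]; exact (lit_cst _).neg _
    · have : res i c (var j) = var j := by funext x; simp [res, var, hij]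
      rw [res_neg, this]
      exact lit_var (by simp [hij, hj]) _
  · exact Or.inr (Or.inr ⟨h, hh, hm, t, rfl⟩)

theorem valid_res {V : Finset ι} {G v} (i : ι) (c) (h : Valid V G v) :
    Valid (V.erase i) G (fun h => res i c (v h)) := by
  intro g hg
  obtain ⟨a, b, r, ha, hb, h⟩ := h g hg
  exact ⟨_, _, r, lit_res i c ha, lit_res i c hb, by simp only [h]; rfl⟩

theorem pV_update {V : Finset ι} {i} (hi : i ∈ V) (x : ι → Bool) (c) :
    pV V (Function.update x i c) = xor c (pV (V.erase i) x) := by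
  unfold pV
  rw [← Finset.add_sum_erase _ _ hi]
  have : ∑ j ∈ V.erase i, (Function.update x i c j).toNat = ∑ j ∈ V.erase i, (x j).toNat := by
    apply Finset.sum_congr rfl
    intro j hj
    rw [Function.update_of_ne (Finset.ne_of_mem_erase hj)]
  rw [this, Function.update_self]
  cases c
  · simp
  · simp only [Bool.toNat_true, Bool.true_xor]
    rw [← decide_not, decide_eq_decide]
    omega

theorem pV_flip {V : Finset ι} {i} (hi : i ∈ V) (x : ι → Bool) :
    pV V (Function.update x i true) ≠ pV V (Function.update x i false) := by
  rw [pV_update hi, pV_update hi]; simp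

theorem res_pV {V : Finset ι} {i} (hi : i ∈ V) (c) :
    res i c (pV V) = neg c (pV (V.erase i)) := by
  funext x; exact pV_update hi x c

/-- one of the two wires is plus or minus `f` -/
def Ref (f a b : (ι → Bool) → Bool) : Prop := (∃ s, a = neg s f) ∨ (∃ s, b = neg s f)

theorem kill {V : Finset ι} {G v m f a b} (i : ι) (c d r) (ha : LitP V G v m a)
    (hb : LitP V G v m b) (hr : Ref f a b) (hf : res i c f = cst d) :
    LitP (V.erase i) G (fun h => res i c (v h)) m (res i c (comb r a b)) := by
  have ha' := lit_res i c ha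
  have hb' := lit_res i c hb
  rw [res_comb]
  rcases hr with ⟨s, rfl⟩ | ⟨s, rfl⟩
  · rw [res_neg, hf]
    exact lit_comb_cst hb' r (xor s d)
  · rw [res_neg, hf, comb_comm]
    exact lit_comb_cst ha' r (xor s d)

theorem lit_erase {V : Finset ι} {G v m f} {h0 : ℕ} (h : LitP V G v m f)
    (hne : ∀ s, f ≠ neg s (v h0)) : LitP V (G.erase h0) v m f := by
  rcases h with h | h | ⟨h, hh, hm1, t, rfl⟩
  · exact Or.inl h
  · exact Or.inr (Or.inl h)
  · refine Or.inr (Or.inr ⟨h, ?_, hm1, t, rfl⟩)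
    rw [Finset.mem_erase]
    refine ⟨?_, hh⟩
    rintro rfl
    exact hne t rfl

theorem lower (s : ℕ) : ∀ (V : Finset ι) (G : Finset ℕ) (v : ℕ → (ι → Bool) → Bool) (m : ℕ),
    G.card = s → Valid V G v → LitP V G v m (pV V) → 3 * (V.card - 1) ≤ G.card := by
  induction s using Nat.strong_induction_on with
  | _ s ih =>
  intro V G v m hs hV hout
  by_cases hcard : V.card ≤ 1
  · have : V.card - 1 = 0 := by omega
    simp [this]
  push Not at hcard
  -- no redundant gates
  by_cases hred : ∃ g ∈ G, LitP V G v g (v g)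
  · obtain ⟨g, hg, hl⟩ := hred
    have hR : ∀ g' ∈ ({g} : Finset ℕ), LitP V G v g' (v g') := by simpa using hl
    have hc : (G \ {g}).card < G.card := by
      apply Finset.card_lt_card
      rw [Finset.sdiff_singleton_eq_erase]
      exact Finset.erase_ssubset hg
    have := ih _ (by omega) V (G \ {g}) v m rfl (valid_sdiff hV hR) (lit_sdiff hR _ _ hout)
    omega
  push Not at hred
  have hV0 := hV
  choose! a b r ha hb hv using hV
  -- erasing unreferenced gates
  have herase : ∀ g ∈ G, (∀ k ∈ G, ¬ Ref (v g) (a k) (b k)) → (∀ s, pV V ≠ neg s (v g)) →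
      3 * (V.card - 1) ≤ G.card := by
    intro g hg hk ho
    have hc : (G.erase g).card < G.card := Finset.card_lt_card (Finset.erase_ssubset hg)
    have := ih _ (by omega) V (G.erase g) v m rfl ?_ (lit_erase hout ho)
    · omega
    · intro k hkG
      have hkG := Finset.mem_of_mem_erase hkG
      refine ⟨a k, b k, r k, lit_erase (ha k hkG) ?_, lit_erase (hb k hkG) ?_, hv k hkG⟩
      · intro s hs; exact hk k hkG (Or.inl ⟨s, hs⟩)
      · intro s hs; exact hk k hkG (Or.inr ⟨s, hs⟩)
  -- eliminating three gates
  have hthree : ∀ i ∈ V, ∀ c, ∀ g h k, g ∈ G → h ∈ G → k ∈ G → g ≠ h → k ≠ g → k ≠ h →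
      LitP (V.erase i) G (fun h => res i c (v h)) g (res i c (v g)) →
      LitP (V.erase i) G (fun h => res i c (v h)) h (res i c (v h)) →
      LitP (V.erase i) G (fun h => res i c (v h)) k (res i c (v k)) →
      3 * (V.card - 1) ≤ G.card := by
    intro i hi c g h k hg hh hk hgh hkg hkh lg lh lk
    have hR : ∀ g' ∈ ({g, h, k} : Finset ℕ),
        LitP (V.erase i) G (fun h => res i c (v h)) g' (res i c (v g')) := by
      intro g' hg'
      simp only [Finset.mem_insert, Finset.mem_singleton] at hg'
      rcases hg' with rfl | rfl | rfl <;> assumption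
    have hsub : ({g, h, k} : Finset ℕ) ⊆ G := by
      intro g' hg'
      simp only [Finset.mem_insert, Finset.mem_singleton] at hg'
      rcases hg' with rfl | rfl | rfl <;> assumption
    have h3 : ({g, h, k} : Finset ℕ).card = 3 := by
      rw [Finset.card_eq_three]; exact ⟨g, h, k, hgh, hkg.symm, hkh.symm, rfl⟩
    have hc := Finset.card_sdiff_add_card_eq_card hsub
    have ho := lit_res i c hout
    rw [res_pV hi] at ho
    have ho := ho.neg c
    have e : neg c (neg c (pV (V.erase i))) = pV (V.erase i) := by
      rw [neg_neg']; funext x; simp [neg]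
    rw [e] at ho
    have := ih _ (by omega) (V.erase i) (G \ {g, h, k}) _ m rfl
      (valid_sdiff (valid_res i c hV0) hR) (lit_sdiff hR _ _ ho)
    rw [Finset.card_erase_of_mem hi] at this
    omega
  -- output is not a literal
  have hout_var : ∀ j s, pV V ≠ neg s (var j) := by
    intro j s heq
    obtain ⟨i, hi, hij⟩ := Finset.exists_mem_ne hcard j
    apply pV_flip hi (fun _ => false)
    rw [heq]; simp [neg, var, Function.update_of_ne hij.symm]
  have hout_cst : ∀ s, pV V ≠ cst s := by
    intro s heq
    obtain ⟨i, hi⟩ := Finset.card_pos.1 (by omega : 0 < V.card)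
    apply pV_flip hi (fun _ => false)
    rw [heq]; rfl
  have hout_res : ∀ g, ∀ i ∈ V, ∀ c d, res i c (v g) = cst d → ∀ s, pV V ≠ neg s (v g) := by
    intro g i hi c d hres s heq
    have h1 : res i c (pV V) = cst (xor s d) := by rw [heq, res_neg, hres]; rfl
    rw [res_pV hi] at h1
    obtain ⟨j, hj, hij⟩ := Finset.exists_mem_ne hcard i
    apply pV_flip (V := V.erase i) (i := j) (by simp [hij, hj]) (fun _ => false)
    have e := neg_swap h1.symm
    rw [e]; rfl
  have hne : G.Nonempty := by
    rcases hout with ⟨s, h⟩ | ⟨i, _, s, h⟩ | ⟨h, hh, _⟩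
    · exact absurd h (hout_cst s)
    · exact absurd h (hout_var i s)
    · exact ⟨h, hh⟩
  obtain ⟨g, hg, hmin⟩ : ∃ g ∈ G, ∀ k ∈ G, g ≤ k :=
    ⟨G.min' hne, G.min'_mem hne, fun k hk => G.min'_le k hk⟩
  obtain ⟨i, hi, p, hai⟩ : ∃ i ∈ V, ∃ s, a g = neg s (var i) := by
    rcases ha g hg with ⟨s, h⟩ | h | ⟨h, hh, hlt, _⟩
    · exact absurd (by rw [hv g hg, h]; exact lit_comb_cst (hb g hg) _ _) (hred g hg)
    · exact h
    · exact absurd (hmin h hh) (by omega)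
  obtain ⟨j, hj, q, hbj⟩ : ∃ i ∈ V, ∃ s, b g = neg s (var i) := by
    rcases hb g hg with ⟨s, h⟩ | h | ⟨h, hh, hlt, _⟩
    · exact absurd (by rw [hv g hg, h, comb_comm]; exact lit_comb_cst (ha g hg) _ _) (hred g hg)
    · exact h
    · exact absurd (hmin h hh) (by omega)
  have hij : i ≠ j := by
    rintro rfl
    apply hred g hg
    rw [hv g hg, hai, hbj]
    by_cases hpq : p = q
    · have : comb (r g) (neg p (var i)) (neg q (var i)) = neg (xor (r g) p) (var i) := by
        subst hpq; funext x; simp [comb, neg, Bool.xor_assoc]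
      rw [this]; exact lit_var hi _
    · have : comb (r g) (neg p (var i)) (neg q (var i)) = cst (r g) := by
        funext x
        simp only [comb, neg, var, cst]
        revert hpq
        cases p <;> cases q <;> cases x i <;> simp_all
      rw [this]; exact lit_cst _
  -- another gate reading variable i
  obtain ⟨h, hh, hhg, hhi⟩ : ∃ h ∈ G, h ≠ g ∧ Ref (var i) (a h) (b h) := by
    by_contra hcon
    push Not at hcon
    have claim : ∀ N, ∀ h ∈ G, h = N → ∀ x : ι → Bool, x j = q →
        v h (Function.update x i true) = v h (Function.update x i false) := by
      intro N
      induction N using Nat.strong_induction_on with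
      | _ N ihN =>
      intro h hh hN x hx
      subst hN
      by_cases hhg : h = g
      · subst hhg
        rw [hv h hh, hbj]
        simp [comb, neg, var, Function.update_of_ne hij.symm, hx]
      · have hnr := hcon h hh hhg
        have key : ∀ f, LitP V G v h f → (∀ s, f ≠ neg s (var i)) →
            f (Function.update x i true) = f (Function.update x i false) := by
          intro f hf hfi
          rcases hf with ⟨t, rfl⟩ | ⟨l, hl, t, rfl⟩ | ⟨k, hk, hm, t, rfl⟩
          · rfl
          · have : l ≠ i := by rintro rfl; exact hfi t rfl
            simp [neg, var, Function.update_of_ne this]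
          · simp only [neg]
            rw [ihN k hm k hk rfl x hx]
        rw [hv h hh]
        simp only [comb]
        rw [key (a h) (ha h hh) (fun s hs => hnr (Or.inl ⟨s, hs⟩)),
          key (b h) (hb h hh) (fun s hs => hnr (Or.inr ⟨s, hs⟩))]
    rcases hout with ⟨s, h⟩ | ⟨i, _, s, h⟩ | ⟨h, hh, _, s, he⟩
    · exact absurd h (hout_cst s)
    · exact absurd h (hout_var i s)
    · apply pV_flip hi (fun _ => q)
      rw [he]
      simp only [neg]
      rw [claim h h hh rfl _ rfl]
  have hgc : res i p (v g) = cst (r g) := by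
    rw [hv g hg, hai, res_comb, res_neg, res_var]
    funext x; simp [comb, neg, cst]
  have Lg : LitP (V.erase i) G (fun h => res i p (v h)) g (res i p (v g)) := by
    rw [hgc]; exact lit_cst _
  have Lh : LitP (V.erase i) G (fun h => res i p (v h)) h (res i p (v h)) := by
    have := kill i p p (r h) (ha h hh) (hb h hh) hhi (res_var i p)
    rwa [← hv h hh] at this
  have selfref : ∀ k ∈ G, ¬ Ref (v k) (a k) (b k) := by
    intro k hk hr
    apply hred k hk
    rcases hr with ⟨s, hs⟩ | ⟨s, hs⟩
    · rw [neg_swap hs]; exact (ha k hk).neg _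
    · rw [neg_swap hs]; exact (hb k hk).neg _
  by_cases hk1 : ∃ k ∈ G, k ≠ g ∧ k ≠ h ∧ Ref (v g) (a k) (b k)
  · obtain ⟨k, hk, hkg, hkh, hkr⟩ := hk1
    have Lk := kill i p (r g) (r k) (ha k hk) (hb k hk) hkr hgc
    rw [← hv k hk] at Lk
    exact hthree i hi p g h k hg hh hk hhg.symm hkg hkh Lg Lh Lk
  push Not at hk1
  by_cases hhr : Ref (v g) (a h) (b h)
  swap
  · apply herase g hg _ (hout_res g i hi p _ hgc)
    intro k hk
    by_cases hkg : k = g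
    · subst hkg; exact selfref k hk
    by_cases hkh : k = h
    · subst hkh; exact hhr
    exact hk1 k hk hkg hkh
  have hboth : ∀ f s t, f = neg s (var i) → f = neg t (v g) → False := by
    intro f s t h1 h2
    apply hred g hg
    rw [neg_swap h2, h1]
    exact (lit_var hi _).neg _
  obtain ⟨d, hhc⟩ : ∃ d, res i p (v h) = cst d := by
    rcases hhi with ⟨s, hs⟩ | ⟨s, hs⟩ <;> rcases hhr with ⟨t, ht⟩ | ⟨t, ht⟩
    · exact (hboth _ _ _ hs ht).elim
    · rw [hv h hh, hs, ht, res_comb, res_neg, res_neg, res_var, hgc]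
      exact ⟨xor (r h) ((xor s p) && (xor t (r g))), rfl⟩
    · rw [hv h hh, hs, ht, res_comb, res_neg, res_neg, res_var, hgc]
      exact ⟨xor (r h) ((xor t (r g)) && (xor s p)), rfl⟩
    · exact (hboth _ _ _ hs ht).elim
  by_cases hk2 : ∃ k ∈ G, k ≠ g ∧ k ≠ h ∧ Ref (v h) (a k) (b k)
  · obtain ⟨k, hk, hkg, hkh, hkr⟩ := hk2
    have Lk := kill i p d (r k) (ha k hk) (hb k hk) hkr hhc
    rw [← hv k hk] at Lk
    exact hthree i hi p g h k hg hh hk hhg.symm hkg hkh Lg Lh Lk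
  push Not at hk2
  apply herase h hh _ (hout_res h i hi p _ hhc)
  intro k hk
  by_cases hkg : k = g
  · subst hkg
    intro hr
    apply hred h hh
    rcases hr with ⟨s, hs⟩ | ⟨s, hs⟩
    · rw [neg_swap hs, hai]; exact (lit_var hi _).neg _
    · rw [neg_swap hs, hbj]; exact (lit_var hj _).neg _
  by_cases hkh : k = h
  · subst hkh; exact selfref k hk
  exact hk2 k hk hkg hkh

theorem u2_form (φ : Bool → Bool → Bool) (h : IsU2 φ) :
    (∃ p q r, ∀ a b, φ a b = xor r ((xor p a) && (xor q b))) ∨ (∃ p, ∀ a b, φ a b = p) ∨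
    (∃ p, ∀ a b, φ a b = xor p a) ∨ (∃ p, ∀ a b, φ a b = xor p b) := by
  obtain ⟨h1, h2⟩ := h
  have h1' : ¬ ∀ a b, φ a b = xor a b := fun h => h1 (by funext a b; exact h a b)
  have h2' : ¬ ∀ a b, φ a b = !(xor a b) := fun h => h2 (by funext a b; exact h a b)
  clear h1 h2
  simp only [Bool.forall_bool, Bool.exists_bool] at *
  generalize φ true true = A at *
  generalize φ true false = B at *
  generalize φ false true = C at *
  generalize φ false false = D at *
  clear φ
  cases A <;> cases B <;> cases C <;> cases D <;> simp at *

/-- value of a wire -/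
def wv {n : ℕ} (C : Circuit (Fin n)) (N : ℕ) (hN : N ≤ C.size) (w : (Fin n ⊕ Bool) ⊕ Fin N)
    (x : Fin n → Bool) : Bool :=
  match w with
  | .inl (.inl i) => x i
  | .inl (.inr b) => b
  | .inr h => C.nodeVal x ⟨h.val, h.isLt.trans_le hN⟩

theorem nodeVal_eq {n : ℕ} (C : Circuit (Fin n)) (x : Fin n → Bool) (g : Fin C.size) :
    C.nodeVal x g = C.gate g (wv C g.val g.isLt.le (C.in1 g) x) (wv C g.val g.isLt.le (C.in2 g) x) := by
  rw [Circuit.nodeVal]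
  congr 1
  · rcases C.in1 g with (i | s) | h <;> rfl
  · rcases C.in2 g with (i | s) | h <;> rfl

def cv {n : ℕ} (C : Circuit (Fin n)) (g : ℕ) : (Fin n → Bool) → Bool :=
  fun x => if h : g < C.size then C.nodeVal x ⟨g, h⟩ else false

theorem lit_wv {n : ℕ} (C : Circuit (Fin n)) (N : ℕ) (hN : N ≤ C.size)
    (w : (Fin n ⊕ Bool) ⊕ Fin N) :
    LitP Finset.univ (Finset.range C.size) (cv C) N (wv C N hN w) := by
  rcases w with (i | s) | h
  · exact Or.inr (Or.inl ⟨i, Finset.mem_univ _, false, by funext x; simp [wv, neg, var]⟩)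
  · exact Or.inl ⟨s, rfl⟩
  · have hl := h.isLt.trans_le hN
    refine Or.inr (Or.inr ⟨h.val, Finset.mem_range.2 hl, h.isLt, false, ?_⟩)
    funext x; simp [wv, neg, cv, hl]

theorem circuit_lower {n : ℕ} (C : Circuit (Fin n)) (hU : C.IsU2Circuit)
    (hC : C.Computes (parity n)) : 3 * (n - 1) ≤ C.size := by
  have := lower C.size (Finset.univ : Finset (Fin n)) (Finset.range C.size) (cv C) C.size
    (by simp) ?_ ?_
  · simpa using this
  · intro g hg
    have hg := Finset.mem_range.1 hg
    have L1 := lit_wv C g hg.le (C.in1 ⟨g, hg⟩)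
    have L2 := lit_wv C g hg.le (C.in2 ⟨g, hg⟩)
    have e : cv C g = fun x => C.gate ⟨g, hg⟩ (wv C g hg.le (C.in1 ⟨g, hg⟩) x)
        (wv C g hg.le (C.in2 ⟨g, hg⟩) x) := by
      funext x; simp only [cv, hg, dif_pos]; rw [nodeVal_eq]
    rw [e]
    rcases u2_form _ (hU ⟨g, hg⟩) with ⟨p, q, r, h⟩ | ⟨p, h⟩ | ⟨p, h⟩ | ⟨p, h⟩
    · exact ⟨_, _, r, L1.neg p, L2.neg q, by funext x; rw [h]; rfl⟩
    · exact ⟨_, _, p, lit_cst false, lit_cst false, by funext x; rw [h]; simp [comb, cst]⟩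
    · exact ⟨_, _, p, L1, lit_cst true, by funext x; rw [h]; simp [comb, cst]⟩
    · exact ⟨_, _, p, L2, lit_cst true, by funext x; rw [h]; simp [comb, cst]⟩
  · have e : pV (Finset.univ : Finset (Fin n)) = wv C C.size le_rfl C.out := by
      funext x
      have := hC x
      rw [Circuit.eval] at this
      refine Eq.trans this.symm ?_
      rcases C.out with (i | s) | h <;> rfl
    rw [e]
    exact lit_wv C C.size le_rfl C.out

/-- the standard parity circuit -/
def pc (n : ℕ) (hn : 2 ≤ n) : Circuit (Fin n) where
  size := 3 * (n - 1)
  gate g := if g.val % 3 = 0 then fun a b => a && !b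
    else if g.val % 3 = 1 then fun a b => !a && b else fun a b => a || b
  in1 g :=
    if h2 : g.val % 3 = 2 then .inr ⟨g.val - 2, by omega⟩
    else if h0 : g.val / 3 = 0 then .inl (.inl ⟨0, by omega⟩)
    else .inr ⟨3 * (g.val / 3) - 1, by omega⟩
  in2 g :=
    if h2 : g.val % 3 = 2 then .inr ⟨g.val - 1, by omega⟩
    else .inl (.inl ⟨g.val / 3 + 1, by have := g.isLt; omega⟩)
  out := .inr ⟨3 * (n - 1) - 1, by omega⟩

def pre (n : ℕ) (x : Fin n → Bool) : ℕ → Bool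
  | 0 => if h : 0 < n then x ⟨0, h⟩ else false
  | k + 1 => xor (pre n x k) (if h : k + 1 < n then x ⟨k + 1, h⟩ else false)

theorem pc_u2 (n : ℕ) (hn : 2 ≤ n) : (pc n hn).IsU2Circuit := by
  intro g
  simp only [pc, IsU2]
  split_ifs <;> decide

theorem pc_step (n : ℕ) (hn : 2 ≤ n) (x : Fin n → Bool) (k : ℕ)
    (hk : 3 * k + 2 < (pc n hn).size) (P : Bool)
    (h0 : wv (pc n hn) (3 * k) (by omega) ((pc n hn).in1 ⟨3 * k, by omega⟩) x = P)
    (h1 : wv (pc n hn) (3 * k + 1) (by omega) ((pc n hn).in1 ⟨3 * k + 1, by omega⟩) x = P) :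
    (pc n hn).nodeVal x ⟨3 * k + 2, hk⟩ =
      xor P (if h : k + 1 < n then x ⟨k + 1, h⟩ else false) := by
  have hkn : k + 1 < n := by
    have : 3 * k + 2 < 3 * (n - 1) := hk
    omega
  have e0 : (pc n hn).nodeVal x ⟨3 * k, by omega⟩ = (P && !(x ⟨k + 1, hkn⟩)) := by
    rw [nodeVal_eq]
    have hi : (pc n hn).in2 ⟨3 * k, by omega⟩ = .inl (.inl ⟨k + 1, hkn⟩) := by
      simp [pc]
    rw [h0, hi]
    simp [pc, wv]
  have e1 : (pc n hn).nodeVal x ⟨3 * k + 1, by omega⟩ = (!P && (x ⟨k + 1, hkn⟩)) := by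
    rw [nodeVal_eq]
    have hi : (pc n hn).in2 ⟨3 * k + 1, by omega⟩ = .inl (.inl ⟨k + 1, hkn⟩) := by
      have h3 : (3 * k + 1) / 3 = k := by omega
      have h4 : ¬ (3 * k + 1) % 3 = 2 := by omega
      simp [pc, h3, h4]
    rw [h1, hi]
    have h4 : (3 * k + 1) % 3 = 1 := by omega
    simp [pc, wv, h4]
  have h4 : (3 * k + 2) % 3 = 2 := by omega
  rw [nodeVal_eq]
  have hi1 : (pc n hn).in1 ⟨3 * k + 2, hk⟩ = .inr ⟨3 * k, by simp⟩ := by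
    simp [pc, h4]
  have hi2 : (pc n hn).in2 ⟨3 * k + 2, hk⟩ = .inr ⟨3 * k + 1, by simp⟩ := by
    simp [pc, h4]
  rw [hi1, hi2]
  simp only [wv]
  rw [e0, e1]
  simp only [pc, h4, hkn, dif_pos]
  cases P <;> cases x ⟨k + 1, hkn⟩ <;> rfl

theorem pc_val (n : ℕ) (hn : 2 ≤ n) (x : Fin n → Bool) (k : ℕ) :
    ∀ hk : 3 * k + 2 < (pc n hn).size,
      (pc n hn).nodeVal x ⟨3 * k + 2, hk⟩ = pre n x (k + 1) := by
  induction k with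
  | zero =>
    intro hk
    rw [pre]
    have hn0 : 0 < n := by omega
    apply pc_step n hn x 0 hk
    · simp [pc, wv, pre, hn0]
    · simp [pc, wv, pre, hn0]
  | succ k ih =>
    intro hk
    rw [pre, ← ih (by omega)]
    apply pc_step n hn x (k + 1) hk
    · have hi : (pc n hn).in1 ⟨3 * (k + 1), by omega⟩ = .inr ⟨3 * k + 2, by simp; omega⟩ := by
        simp [pc]; omega
      rw [hi]; rfl
    · have hi : (pc n hn).in1 ⟨3 * (k + 1) + 1, by omega⟩ = .inr ⟨3 * k + 2, by simp; omega⟩ := by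
        have h3 : (3 * (k + 1) + 1) / 3 = k + 1 := by omega
        have h4 : ¬ (3 * (k + 1) + 1) % 3 = 2 := by omega
        simp [pc, h3, h4]; omega
      rw [hi]; rfl

theorem pre_eq (n : ℕ) (x : Fin n → Bool) (k : ℕ) :
    pre n x k = decide ((∑ i ∈ Finset.range (k+1),
      (if h : i < n then x ⟨i, h⟩ else false).toNat) % 2 = 1) := by
  induction k with
  | zero =>
    simp only [pre, zero_add, Finset.sum_range_one]
    generalize (if h : 0 < n then x ⟨0, h⟩ else false) = y
    cases y <;> simp
  | succ k ih =>
    rw [Finset.sum_range_succ, pre, ih]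
    generalize (∑ i ∈ Finset.range (k+1), (if h : i < n then x ⟨i, h⟩ else false).toNat) = S
    generalize (if h : k + 1 < n then x ⟨k+1, h⟩ else false) = y
    cases y
    · simp
    · simp only [Bool.toNat_true, Bool.xor_true]
      rw [← decide_not, decide_eq_decide]
      omega

theorem pc_computes (n : ℕ) (hn : 2 ≤ n) : (pc n hn).Computes (parity n) := by
  intro x
  obtain ⟨k, rfl⟩ : ∃ k, n = k + 2 := ⟨n - 2, by omega⟩
  have h1 := pc_val (k+2) hn x k (by simp only [pc]; omega)
  have h2 : (pc (k+2) hn).eval x = (pc (k+2) hn).nodeVal x ⟨3 * k + 2, by simp only [pc]; omega⟩ := rfl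
  rw [h2, h1, pre_eq, parity, ← Fin.sum_univ_eq_sum_range (fun i => (if h : i < k + 2 then x ⟨i, h⟩ else false).toNat)]
  simp

end ParLB

/-- For every `n ≥ 2`, the minimum size of a deterministic
`U₂`-circuit computing `Parity_n` equals `3(n-1)`. -/
theorem sizeDC_parity (n : ℕ) (hn : 2 ≤ n) : sizeDC (parity n) = 3 * (n - 1) := by
  unfold sizeDC
  apply le_antisymm
  · exact Nat.sInf_le ⟨ParLB.pc n hn, ParLB.pc_u2 n hn, ParLB.pc_computes n hn, rfl⟩
  · apply le_csInf
    · exact ⟨_, ParLB.pc n hn, ParLB.pc_u2 n hn, ParLB.pc_computes n hn, rfl⟩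
    · rintro s ⟨C, hU, hC, rfl⟩
      exact ParLB.circuit_lower C hU hC
end

section
/- For every n ≥ 2, every deterministic U_2-circuit computing the parity function Parity_n has at least 3(n-1) gates. -/
set_option linter.unusedSectionVars false
namespace ParU2

abbrev Fn (ι : Type) := (ι → Bool) → Bool

variable {ι : Type} [DecidableEq ι]

def W (T : Finset ι) (N : Finset ℕ) (v : ℕ → Fn ι) (g : ℕ) : Set (Fn ι) :=
  {w | ∃ s : Bool, (w = fun _ => s) ∨ (∃ i ∈ T, w = fun x => xor s (x i)) ∨
    (∃ h ∈ N, h < g ∧ w = fun x => xor s (v h x))}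

def Andy (S : Set (Fn ι)) : Set (Fn ι) :=
  {u | ∃ a ∈ S, ∃ b ∈ S, ∃ s : Bool, u = fun x => xor s (a x && b x)}

def Valid (T : Finset ι) (N : Finset ℕ) (v : ℕ → Fn ι) : Prop :=
  ∀ g ∈ N, v g ∈ Andy (W T N v g)

def Sens (T : Finset ι) (f : Fn ι) : Prop :=
  ∀ i ∈ T, ∀ x, f (Function.update x i (!x i)) = !f x

theorem Andy_mono {S S' : Set (Fn ι)} (h : S ⊆ S') : Andy S ⊆ Andy S' := by
  rintro u ⟨a, ha, b, hb, s, rfl⟩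
  exact ⟨a, h ha, b, h hb, s, rfl⟩

theorem W_const (T : Finset ι) (N : Finset ℕ) (v : ℕ → Fn ι) (g : ℕ) (s : Bool) :
    (fun _ => s) ∈ W T N v g := ⟨s, Or.inl rfl⟩

theorem W_mono {T T' : Finset ι} {N N' : Finset ℕ} {v : ℕ → Fn ι} {g g' : ℕ}
    (hT : T ⊆ T') (hN : N ⊆ N') (hg : g ≤ g') : W T N v g ⊆ W T' N' v g' := by
  rintro w ⟨s, h | ⟨i, hi, h⟩ | ⟨k, hk, hlt, h⟩⟩
  · exact ⟨s, Or.inl h⟩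
  · exact ⟨s, Or.inr (Or.inl ⟨i, hT hi, h⟩)⟩
  · exact ⟨s, Or.inr (Or.inr ⟨k, hN hk, hlt.trans_le hg, h⟩)⟩

theorem W_xor {T : Finset ι} {N : Finset ℕ} {v : ℕ → Fn ι} {g : ℕ} {w : Fn ι}
    (hw : w ∈ W T N v g) (t : Bool) : (fun x => xor t (w x)) ∈ W T N v g := by
  obtain ⟨s, rfl | ⟨i, hi, rfl⟩ | ⟨k, hk, hlt, rfl⟩⟩ := hw
  · exact ⟨xor t s, Or.inl rfl⟩
  · exact ⟨xor t s, Or.inr (Or.inl ⟨i, hi, by funext x; simp⟩)⟩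
  · exact ⟨xor t s, Or.inr (Or.inr ⟨k, hk, hlt, by funext x; simp⟩)⟩

theorem W_and_const {T : Finset ι} {N : Finset ℕ} {v : ℕ → Fn ι} {g : ℕ} {b : Fn ι}
    (hb : b ∈ W T N v g) (s t : Bool) : (fun x => xor s (t && b x)) ∈ W T N v g := by
  cases t
  · simpa using W_const T N v g s
  · simpa using W_xor hb s

theorem W_and_const' {T : Finset ι} {N : Finset ℕ} {v : ℕ → Fn ι} {g : ℕ} {b : Fn ι}
    (hb : b ∈ W T N v g) (s t : Bool) : (fun x => xor s (b x && t)) ∈ W T N v g := by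
  cases t
  · simpa using W_const T N v g s
  · simpa using W_xor hb s

theorem W_sub_Andy {T : Finset ι} {N : Finset ℕ} {v : ℕ → Fn ι} {g : ℕ} :
    W T N v g ⊆ Andy (W T N v g) := by
  intro w hw
  exact ⟨w, hw, fun _ => true, W_const _ _ _ _ _, false, by funext x; simp⟩

theorem W_erase {T : Finset ι} {N : Finset ℕ} {v : ℕ → Fn ι} {d : ℕ}
    (hd : v d ∈ W T N v d) (g : ℕ) : W T N v g ⊆ W T (N.erase d) v g := by
  rintro w ⟨s, h | ⟨i, hi, h⟩ | ⟨k, hk, hlt, h⟩⟩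
  · exact ⟨s, Or.inl h⟩
  · exact ⟨s, Or.inr (Or.inl ⟨i, hi, h⟩)⟩
  · by_cases hkd : k = d
    · subst hkd
      rw [h]
      apply W_xor
      obtain ⟨s, h | ⟨i, hi, h⟩ | ⟨m, hm, hlt', h⟩⟩ := hd
      · exact ⟨s, Or.inl h⟩
      · exact ⟨s, Or.inr (Or.inl ⟨i, hi, h⟩)⟩
      · exact ⟨s, Or.inr (Or.inr ⟨m, Finset.mem_erase.2 ⟨hlt'.ne, hm⟩, hlt'.trans hlt, h⟩)⟩
    · exact ⟨s, Or.inr (Or.inr ⟨k, Finset.mem_erase.2 ⟨hkd, hk⟩, hlt, h⟩)⟩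

theorem Valid_erase {T : Finset ι} {N : Finset ℕ} {v : ℕ → Fn ι} {d : ℕ}
    (hV : Valid T N v) (hd : v d ∈ W T N v d) : Valid T (N.erase d) v :=
  fun g hg => Andy_mono (W_erase hd g) (hV g (Finset.mem_of_mem_erase hg))

theorem W_restrict {T : Finset ι} {N : Finset ℕ} {v : ℕ → Fn ι} {g : ℕ} (i : ι) (c : Bool)
    {w : Fn ι} (hw : w ∈ W T N v g) :
    (fun x => w (Function.update x i c)) ∈
      W (T.erase i) N (fun h x => v h (Function.update x i c)) g := by
  obtain ⟨s, rfl | ⟨j, hj, rfl⟩ | ⟨k, hk, hlt, rfl⟩⟩ := hw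
  · exact ⟨s, Or.inl rfl⟩
  · by_cases h : j = i
    · subst h
      exact ⟨xor s c, Or.inl (by funext x; simp)⟩
    · exact ⟨s, Or.inr (Or.inl ⟨j, Finset.mem_erase.2 ⟨h, hj⟩, by funext x; simp [h]⟩)⟩
  · exact ⟨s, Or.inr (Or.inr ⟨k, hk, hlt, rfl⟩)⟩

theorem Valid_restrict {T : Finset ι} {N : Finset ℕ} {v : ℕ → Fn ι} (i : ι) (c : Bool)
    (hV : Valid T N v) :
    Valid (T.erase i) N (fun h x => v h (Function.update x i c)) := by
  intro g hg
  obtain ⟨a, ha, b, hb, s, h⟩ := hV g hg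
  exact ⟨_, W_restrict i c ha, _, W_restrict i c hb, s, by simp only [h]⟩

theorem Sens_restrict {T : Finset ι} {f : Fn ι} (i : ι) (c : Bool) (hf : Sens T f) :
    Sens (T.erase i) (fun x => f (Function.update x i c)) := by
  intro j hj x
  obtain ⟨hne, hj⟩ := Finset.mem_erase.1 hj
  have := hf j hj (Function.update x i c)
  simp only
  rw [← this, Function.update_comm hne]
  simp [hne]

/-- no function in the span of the literals only is sensitive -/
theorem not_sens_lit {T : Finset ι} {f : Fn ι} {i j : ι} (hi : i ∈ T) (hj : j ∈ T)
    (hij : i ≠ j) (hf : Sens T f) :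
    (∀ s, f ≠ fun _ => s) ∧ (∀ k s, f ≠ fun x => xor s (x k)) := by
  constructor
  · rintro s rfl
    have := hf i hi (fun _ => false)
    simp at this
  · rintro k s rfl
    by_cases h : k = i
    · subst h
      have := hf j hj (fun _ => false)
      simp [hij] at this
    · have := hf i hi (fun _ => false)
      simp [h] at this

theorem not_mem_erase_T {T : Finset ι} {N : Finset ℕ} {v : ℕ → Fn ι} {g : ℕ} {i : ι}
    {a : Fn ι} (ha : a ∈ W T N v g) (hn : a ∉ W (T.erase i) N v g) :
    ∃ s, a = fun x => xor s (x i) := by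
  obtain ⟨s, h | ⟨j, hj, h⟩ | ⟨k, hk, hlt, h⟩⟩ := ha
  · exact absurd ⟨s, Or.inl h⟩ hn
  · by_cases hji : j = i
    · subst hji; exact ⟨s, h⟩
    · exact absurd ⟨s, Or.inr (Or.inl ⟨j, Finset.mem_erase.2 ⟨hji, hj⟩, h⟩)⟩ hn
  · exact absurd ⟨s, Or.inr (Or.inr ⟨k, hk, hlt, h⟩)⟩ hn

theorem not_mem_erase_N {T : Finset ι} {N : Finset ℕ} {v : ℕ → Fn ι} {g : ℕ} {d : ℕ}
    {a : Fn ι} (ha : a ∈ W T N v g) (hn : a ∉ W T (N.erase d) v g) :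
    d < g ∧ ∃ s, a = fun x => xor s (v d x) := by
  obtain ⟨s, h | ⟨j, hj, h⟩ | ⟨k, hk, hlt, h⟩⟩ := ha
  · exact absurd ⟨s, Or.inl h⟩ hn
  · exact absurd ⟨s, Or.inr (Or.inl ⟨j, hj, h⟩)⟩ hn
  · by_cases hji : k = d
    · subst hji; exact ⟨hlt, s, h⟩
    · exact absurd ⟨s, Or.inr (Or.inr ⟨k, Finset.mem_erase.2 ⟨hji, hk⟩, hlt, h⟩)⟩ hn

/-- A function of the form (lit i) AND (xor of AND of lit i, lit j) is an AND of literals. -/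
theorem combine {T : Finset ι} {N : Finset ℕ} {v : ℕ → Fn ι} {g : ℕ} {i j : ι}
    (hi : i ∈ T) (hj : j ∈ T) (s p q r α β : Bool) :
    (fun x : ι → Bool => xor s ((xor p (x i)) &&
      (xor q (xor r ((xor α (x i)) && (xor β (x j))))))) ∈ Andy (W T N v g) := by
  have Li : ∀ t, (fun x : ι → Bool => xor t (x i)) ∈ W T N v g :=
    fun t => ⟨t, Or.inr (Or.inl ⟨i, hi, rfl⟩)⟩
  have Lj : ∀ t, (fun x : ι → Bool => xor t (x j)) ∈ W T N v g :=
    fun t => ⟨t, Or.inr (Or.inl ⟨j, hj, rfl⟩)⟩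
  by_cases hpα : p = α
  · have := hpα
    · by_cases hqr : xor q r = false
      · refine ⟨_, Li p, _, Lj β, s, ?_⟩
        funext x
        subst hpα
        revert hqr
        cases s <;> cases p <;> cases q <;> cases r <;> cases β <;> cases x i <;>
          cases x j <;> simp
      · refine ⟨_, Li p, _, Lj (!β), s, ?_⟩
        funext x
        subst hpα
        revert hqr
        cases s <;> cases p <;> cases q <;> cases r <;> cases β <;> cases x i <;>
          cases x j <;> simp
  · refine ⟨_, Li p, _, W_const _ _ _ _ (xor q r), s, ?_⟩
    funext x
    revert hpα
    cases s <;> cases p <;> cases q <;> cases r <;> cases α <;> cases β <;> cases x i <;>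
      cases x j <;> simp


theorem indep {T : Finset ι} {N : Finset ℕ} {v : ℕ → Fn ι} {G : ℕ} {i j : ι} (hij : i ≠ j)
    {s α β : Bool} (hG : v G = fun x => xor s ((xor α (x i)) && (xor β (x j))))
    (h1 : ∀ g ∈ N, g ≠ G → v g ∈ Andy (W (T.erase i) N v g)) (x : ι → Bool) (hx : x j = β) :
    ∀ g, g ∈ N → v g (Function.update x i (!x i)) = v g x := by
  intro g
  induction g using Nat.strong_induction_on with
  | _ g ih =>
    intro hg
    by_cases hgG : g = G
    · subst hgG
      rw [hG]
      simp [hij.symm, hx]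
    · have key : ∀ a ∈ W (T.erase i) N v g, a (Function.update x i (!x i)) = a x := by
        rintro a ⟨t, rfl | ⟨k, hk, rfl⟩ | ⟨k, hk, hlt, rfl⟩⟩
        · rfl
        · simp [(Finset.mem_erase.1 hk).1]
        · simp [ih k hlt hk]
      obtain ⟨a, ha, b, hb, t, h⟩ := h1 g hg hgG
      rw [h]
      simp only [key a ha, key b hb]

theorem lower (k : ℕ) : ∀ (T : Finset ι) (N : Finset ℕ) (v : ℕ → Fn ι) (f : Fn ι) (g0 : ℕ),
    N.card = k → Valid T N v → f ∈ W T N v g0 → Sens T f → 3 * (T.card - 1) ≤ N.card := by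
  induction k using Nat.strong_induction_on with
  | _ k ih =>
  intro T N v f g0 hk hV hf hS
  by_cases hT : T.card ≤ 1
  · omega
  obtain ⟨i0, hi0, j0, hj0, hij0⟩ := Finset.one_lt_card.1 (not_le.1 hT)
  obtain ⟨hnc, hnl⟩ := not_sens_lit hi0 hj0 hij0 hS
  have hgate : ∃ h ∈ N, ∃ s, f = fun x => xor s (v h x) := by
    obtain ⟨s, h | ⟨i, hi, h⟩ | ⟨m, hm, hlt, h⟩⟩ := hf
    · exact absurd h (hnc s)
    · exact absurd h (hnl i s)
    · exact ⟨m, hm, s, h⟩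
  have hne : N.Nonempty := by
    obtain ⟨h, hh, _⟩ := hgate
    exact ⟨h, hh⟩
  obtain ⟨G, hGN, hmin⟩ : ∃ G ∈ N, ∀ h ∈ N, G ≤ h :=
    ⟨N.min' hne, N.min'_mem hne, fun h hh => N.min'_le h hh⟩
  have shrink : Valid T (N.erase G) v → f ∈ W T (N.erase G) v g0 →
      3 * (T.card - 1) ≤ N.card := by
    intro h1 h2
    have hc := Finset.card_erase_lt_of_mem hGN
    have := ih _ (hk ▸ hc) T (N.erase G) v f g0 rfl h1 h2 hS
    omega
  by_cases hdeg : v G ∈ W T N v G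
  · exact shrink (Valid_erase hV hdeg) (W_erase hdeg g0 hf)
  obtain ⟨a, ha, b, hb, s, hG⟩ := hV G hGN
  have ha' := ha
  have hb' := hb
  obtain ⟨α, rfl | ⟨i, hi, rfl⟩ | ⟨m, hm, hlt, -⟩⟩ := ha'
  · exact absurd (hG ▸ W_and_const hb s α) hdeg
  swap
  · exact absurd (hmin m hm) (not_le.2 hlt)
  obtain ⟨β, rfl | ⟨j, hj, rfl⟩ | ⟨m, hm, hlt, -⟩⟩ := hb'
  · exact absurd (hG ▸ W_and_const' ha s β) hdeg
  swap
  · exact absurd (hmin m hm) (not_le.2 hlt)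
  have hij : i ≠ j := by
    rintro rfl
    apply hdeg
    rw [hG]
    by_cases hαβ : α = β
    · subst hαβ
      simpa using W_xor ha s
    · refine ⟨s, Or.inl ?_⟩
      funext x
      revert hαβ
      cases s <;> cases α <;> cases β <;> cases x i <;> simp
  have hfG : ∀ t, f ≠ fun x => xor t (v G x) := by
    rintro t rfl
    have := hS j hj (fun _ => α)
    rw [hG] at this
    simp [hij] at this
  by_cases h1 : ∀ g ∈ N, g ≠ G → v g ∈ Andy (W (T.erase i) N v g)
  · exfalso
    obtain ⟨h, hh, t, rfl⟩ := hgate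
    have e1 := indep hij hG h1 (fun _ => β) rfl h hh
    have e2 := hS i hi (fun _ => β)
    simp only [e1] at e2
    simp at e2
  push Not at h1
  obtain ⟨P, hPN, hPG, hP⟩ := h1
  by_cases h2 : ∀ g ∈ N, g ≠ G → v g ∈ Andy (W T (N.erase G) v g)
  · apply shrink
    · intro g hg
      exact h2 g (Finset.mem_of_mem_erase hg) (Finset.ne_of_mem_erase hg)
    · by_contra hcon
      obtain ⟨-, t, ht⟩ := not_mem_erase_N hf hcon
      exact hfG t ht
  by_cases h3 : ∃ H ∈ N, H ≠ G ∧ H ≠ P ∧ v H ∉ Andy (W T (N.erase G) v H)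
  · obtain ⟨H, hHN, hHG, hHP, hH⟩ := h3
    have hV' := Valid_restrict i α hV
    have hf' := W_restrict i α hf
    have hS' := Sens_restrict i α hS
    set v' : ℕ → Fn ι := fun h x => v h (Function.update x i α) with hv'
    have vG : v' G = fun _ => s := by
      funext x
      simp [hv', hG]
    have dG : v' G ∈ W (T.erase i) N v' G := ⟨s, Or.inl vG⟩
    have dP : v' P ∈ W (T.erase i) N v' P := by
      obtain ⟨a, ha, b, hb, t, h⟩ := hV P hPN
      have e : v' P = fun x => xor t (a (Function.update x i α) && b (Function.update x i α)) := by
        funext x; simp only [hv', h]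
      rw [e]
      by_cases ha1 : a ∈ W (T.erase i) N v P
      · have hb1 : b ∉ W (T.erase i) N v P := fun hb1 => hP ⟨a, ha1, b, hb1, t, h⟩
        obtain ⟨q, rfl⟩ := not_mem_erase_T hb hb1
        simpa using W_and_const' (W_restrict i α ha) t (xor q α)
      · obtain ⟨q, rfl⟩ := not_mem_erase_T ha ha1
        simpa using W_and_const (W_restrict i α hb) t (xor q α)
    have dH : v' H ∈ W (T.erase i) N v' H := by
      obtain ⟨a, ha, b, hb, t, h⟩ := hV H hHN
      have e : v' H = fun x => xor t (a (Function.update x i α) && b (Function.update x i α)) := by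
        funext x; simp only [hv', h]
      have vG' : ∀ x, v G (Function.update x i α) = s := fun x => congrFun vG x
      rw [e]
      by_cases ha1 : a ∈ W T (N.erase G) v H
      · have hb1 : b ∉ W T (N.erase G) v H := fun hb1 => hH ⟨a, ha1, b, hb1, t, h⟩
        obtain ⟨-, q, rfl⟩ := not_mem_erase_N hb hb1
        simp only [vG']
        exact W_and_const' (W_restrict i α ha) t (xor q s)
      · obtain ⟨-, q, rfl⟩ := not_mem_erase_N ha ha1
        simp only [vG']
        exact W_and_const (W_restrict i α hb) t (xor q s)
    have hV1 := Valid_erase hV' dG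
    have dP1 := W_erase dG _ dP
    have dH1 := W_erase dP1 _ (W_erase dG _ dH)
    have hV2 := Valid_erase hV1 dP1
    have hV3 := Valid_erase hV2 dH1
    have hf3 := W_erase dH1 _ (W_erase dP1 _ (W_erase dG _ hf'))
    have c1 := Finset.card_erase_add_one hGN
    have c2 := Finset.card_erase_add_one (Finset.mem_erase.2 ⟨hPG, hPN⟩)
    have c3 := Finset.card_erase_add_one
      (Finset.mem_erase.2 ⟨hHP, Finset.mem_erase.2 ⟨hHG, hHN⟩⟩)
    have c4 := Finset.card_erase_add_one hi
    have := ih _ (by omega) _ _ _ _ _ rfl hV3 hf3 hS'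
    omega
  · exfalso
    push Not at h3
    apply h2
    intro g hg hgG
    by_cases hgP : g = P
    swap
    · exact h3 g hg hgG hgP
    subst hgP
    by_contra hPn
    have nolit : ∀ p q, ((fun x : ι → Bool => xor p (x i)) = fun x => xor q (v G x)) → False := by
      intro p q hpq
      apply hdeg
      refine ⟨xor q p, Or.inr (Or.inl ⟨i, hi, ?_⟩)⟩
      funext x
      have := congrFun hpq x
      rw [Bool.xor_assoc, this]
      simp
    obtain ⟨a, ha, b, hb, t, h⟩ := hV g hg
    by_cases ha1 : a ∈ W (T.erase i) N v g
    · have hb1 : b ∉ W (T.erase i) N v g := fun hb1 => hP ⟨a, ha1, b, hb1, t, h⟩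
      obtain ⟨p, rfl⟩ := not_mem_erase_T hb hb1
      by_cases ha2 : a ∈ W T (N.erase G) v g
      · have hb2 : _ ∉ W T (N.erase G) v g := fun hb2 => hPn ⟨a, ha2, _, hb2, t, h⟩
        obtain ⟨-, q, hq⟩ := not_mem_erase_N hb hb2
        exact nolit p q hq
      · obtain ⟨-, q, rfl⟩ := not_mem_erase_N ha ha2
        apply hPn
        have := combine (N := N.erase G) (v := v) (g := g) hi hj t p q s α β
        rw [h, hG]
        simpa only [Bool.and_comm] using this
    · obtain ⟨p, rfl⟩ := not_mem_erase_T ha ha1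
      by_cases hb2 : b ∈ W T (N.erase G) v g
      · have ha2 : _ ∉ W T (N.erase G) v g := fun ha2 => hPn ⟨_, ha2, b, hb2, t, h⟩
        obtain ⟨-, q, hq⟩ := not_mem_erase_N ha ha2
        exact nolit p q hq
      · obtain ⟨-, q, rfl⟩ := not_mem_erase_N hb hb2
        apply hPn
        rw [h, hG]
        exact combine (N := N.erase G) (v := v) (g := g) hi hj t p q s α β

theorem u2_form (f : Bool → Bool → Bool) (hf : IsU2 f) :
    ∃ s p q p' q' : Bool, ∀ a b,
      f a b = xor s ((xor q (p && a)) && (xor q' (p' && b))) := by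
  obtain ⟨h1, h2⟩ := hf
  have h1' : ¬ ∀ a b, f a b = xor a b := fun h => h1 (by funext a b; exact h a b)
  have h2' : ¬ ∀ a b, f a b = !(xor a b) := fun h => h2 (by funext a b; exact h a b)
  revert h1' h2'
  simp only [Bool.forall_bool]
  generalize f false false = x
  generalize f false true = y
  generalize f true false = z
  generalize f true true = w
  revert x y z w
  decide

theorem lit_form {T : Finset ι} {N : Finset ℕ} {v : ℕ → Fn ι} {g : ℕ} {a : Fn ι}
    (ha : a ∈ W T N v g) (p q : Bool) : (fun x => xor q (p && a x)) ∈ W T N v g :=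
  W_and_const ha q p

theorem parity_sens (n : ℕ) : Sens Finset.univ (parity n) := by
  intro i _ x
  unfold parity
  rw [← Finset.add_sum_erase _ _ (Finset.mem_univ i),
    ← Finset.add_sum_erase _ (fun j => (x j).toNat) (Finset.mem_univ i)]
  have : ∑ j ∈ Finset.univ.erase i, (Function.update x i (!x i) j).toNat
      = ∑ j ∈ Finset.univ.erase i, (x j).toNat := by
    apply Finset.sum_congr rfl
    intro j hj
    simp [(Finset.mem_erase.1 hj).1]
  rw [this]
  generalize ∑ j ∈ Finset.univ.erase i, (x j).toNat = m
  rw [Function.update_self, ← decide_not, decide_eq_decide]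
  cases x i <;> simp <;> omega

def gv {n : ℕ} (C : Circuit (Fin n)) (h : ℕ) : Fn (Fin n) :=
  fun x => if hh : h < C.size then C.nodeVal x ⟨h, hh⟩ else false

theorem wire_mem {n : ℕ} (C : Circuit (Fin n)) (g : ℕ) (hg : g ≤ C.size)
    (w : (Fin n ⊕ Bool) ⊕ Fin g) :
    (fun x => match w with
       | .inl (.inl i) => x i
       | .inl (.inr b) => b
       | .inr h => C.nodeVal x ⟨h.val, h.isLt.trans_le hg⟩) ∈
      W Finset.univ (Finset.range C.size) (gv C) g := by
  rcases w with (i | b) | h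
  · exact ⟨false, Or.inr (Or.inl ⟨i, Finset.mem_univ _, by funext x; simp⟩)⟩
  · exact ⟨b, Or.inl rfl⟩
  · refine ⟨false, Or.inr (Or.inr ⟨h, Finset.mem_range.2 (h.isLt.trans_le hg), h.isLt, ?_⟩)⟩
    funext x
    simp [gv, h.isLt.trans_le hg]

theorem valid_of {n : ℕ} (C : Circuit (Fin n)) (hU2 : C.IsU2Circuit) :
    Valid Finset.univ (Finset.range C.size) (gv C) := by
  intro g hg
  have hg' := Finset.mem_range.1 hg
  obtain ⟨s, p, q, p', q', hf⟩ := u2_form _ (hU2 ⟨g, hg'⟩)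
  refine ⟨_, lit_form (wire_mem C g hg'.le (C.in1 ⟨g, hg'⟩)) p q, _,
    lit_form (wire_mem C g hg'.le (C.in2 ⟨g, hg'⟩)) p' q', s, ?_⟩
  funext x
  simp only [gv, hg', dif_pos]
  rw [Circuit.nodeVal, hf]
  rcases C.in1 ⟨g, hg'⟩ with (i | b) | h <;> rcases C.in2 ⟨g, hg'⟩ with (i' | b') | h' <;> rfl

end ParU2

/-- For every `n ≥ 2`, every deterministic `U₂`-circuit computing
`Parity_n` has at least `3(n-1)` gates. -/
theorem parity_detU2_lower_bound (n : ℕ) (hn : 2 ≤ n) (C : Circuit (Fin n))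
    (hU2 : C.IsU2Circuit) (hC : C.Computes (parity n)) :
    3 * (n - 1) ≤ C.size := by
  have hf : parity n ∈ ParU2.W Finset.univ (Finset.range C.size) (ParU2.gv C) C.size := by
    have := ParU2.wire_mem C C.size le_rfl C.out
    convert this using 1
    funext x
    rw [← hC x, Circuit.eval]
    rcases C.out with (i | b) | h <;> rfl
  have := ParU2.lower _ _ _ _ _ _ rfl (ParU2.valid_of C hU2) hf (ParU2.parity_sens n)
  simpa using this
end

section
/- For every n ≥ 2, the minimum size of a nondeterministic U_2-circuit computing the parity function Parity_n equals 3(n-1); that is, size^ndc(Parity_n) = 3(n-1). In particular, nondeterminism cannot reduce the U_2-circuit size of the parity function below the deterministic optimum 3(n-1). -/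
namespace NDP

inductive Nd (ι Y : Type) : Type where
  | var (i : ι) : Nd ι Y
  | fn (h : Y → Bool) : Nd ι Y
  | gate (k : ℕ) : Nd ι Y

variable {ι Y : Type}

def nv (v : ℕ → (ι → Bool) → Y → Bool) (x : ι → Bool) (y : Y) : Nd ι Y → Bool
  | .var i => x i
  | .fn h => h y
  | .gate k => v k x y

def wv (v : ℕ → (ι → Bool) → Y → Bool) (x : ι → Bool) (y : Y) (w : Nd ι Y × Bool) : Bool :=
  xor w.2 (nv v x y w.1)

def ok (T : Finset ι) (k : ℕ) : Nd ι Y → Prop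
  | .var i => i ∈ T
  | .fn _ => True
  | .gate j => j < k

structure Circ (D : (ι → Bool) → Y → Prop) (T : Finset ι) (s : ℕ) : Type where
  in1 : ℕ → Nd ι Y × Bool
  in2 : ℕ → Nd ι Y × Bool
  c : ℕ → Bool
  v : ℕ → (ι → Bool) → Y → Bool
  ok1 : ∀ k < s, ok T k (in1 k).1
  ok2 : ∀ k < s, ok T k (in2 k).1
  eq : ∀ k < s, ∀ x y, D x y → v k x y = xor (c k) (wv v x y (in1 k) && wv v x y (in2 k))

theorem ok_mono {T : Finset ι} {k l : ℕ} (h : k ≤ l) {w : Nd ι Y} (hw : ok T k w) : ok T l w := by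
  cases w <;> simp_all [ok]
  omega

def Circ.swap {D : (ι → Bool) → Y → Prop} {T : Finset ι} {s : ℕ} (C : Circ D T s) : Circ D T s where
  in1 := C.in2
  in2 := C.in1
  c := C.c
  v := C.v
  ok1 := C.ok2
  ok2 := C.ok1
  eq := fun k hk x y h => by rw [C.eq k hk x y h, Bool.and_comm]

def Circ.shrink {D : (ι → Bool) → Y → Prop} {T : Finset ι} {s : ℕ} (C : Circ D T (s+1)) :
    Circ D T s where
  in1 := C.in1
  in2 := C.in2
  c := C.c
  v := C.v
  ok1 := fun k hk => C.ok1 k (by omega)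
  ok2 := fun k hk => C.ok2 k (by omega)
  eq := fun k hk => C.eq k (by omega)

theorem wv_update {T : Finset ι} {s : ℕ} (v : ℕ → (ι → Bool) → Y → Bool) (f) (x : ι → Bool) (y : Y)
    (w : Nd ι Y × Bool) (h : ok T s w.1) : wv (Function.update v s f) x y w = wv v x y w := by
  obtain ⟨n, b⟩ := w
  cases n with
  | var i => rfl
  | fn h => rfl
  | gate k =>
    have : k ≠ s := by simp [ok] at h; omega
    simp [wv, nv, this]

/-- gate `k` is removable on `D'` -/
def Rem (D' : (ι → Bool) → Y → Prop) (T : Finset ι) (v : ℕ → (ι → Bool) → Y → Bool) (k : ℕ) : Prop :=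
  ∃ w : Nd ι Y × Bool, ok T k w.1 ∧ ∀ x y, D' x y → v k x y = wv v x y w

theorem elim {D D' : (ι → Bool) → Y → Prop} {T T' : Finset ι} (hD : ∀ x y, D' x y → D x y)
    (hT : ∀ i ∈ T, i ∉ T' → ∃ c, ∀ x y, D' x y → x i = c) (s : ℕ) :
    ∀ (C : Circ D T s) (R : Finset ℕ) (_ : ∀ k ∈ R, k < s ∧ Rem D' T C.v k),
    ∃ s', s' + R.card = s ∧ ∃ C' : Circ D' T' s', ∀ w : Nd ι Y × Bool, ok T s w.1 →
      ∃ w' : Nd ι Y × Bool, ok T' s' w'.1 ∧ ∀ x y, D' x y → wv C'.v x y w' = wv C.v x y w := by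
  induction s with
  | zero =>
    intro C R hR
    have hR0 : R = ∅ := by
      apply Finset.eq_empty_of_forall_notMem
      intro k hk
      have := (hR k hk).1
      omega
    subst hR0
    refine ⟨0, rfl, ⟨C.in1, C.in2, C.c, C.v, by simp, by simp, by simp⟩, ?_⟩
    rintro ⟨n, b⟩ hw
    cases n with
    | var i =>
      by_cases hi : i ∈ T'
      · exact ⟨(.var i, b), hi, fun _ _ _ => rfl⟩
      · obtain ⟨c, hc⟩ := hT i hw hi
        exact ⟨(.fn (fun _ => c), b), trivial, fun x y h => by simp [wv, nv, hc x y h]⟩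
    | fn h => exact ⟨(.fn h, b), trivial, fun _ _ _ => rfl⟩
    | gate k => simp [ok] at hw
  | succ s ih =>
    intro C R hR
    obtain ⟨s', hs', C', hC'⟩ := ih C.shrink (R.erase s) (by
      intro k hk
      have h1 := Finset.mem_erase.1 hk
      have h2 := hR k h1.2
      exact ⟨by have := h1.1; omega, h2.2⟩)
    change ∀ w : Nd ι Y × Bool, ok T s w.1 →
      ∃ w' : Nd ι Y × Bool, ok T' s' w'.1 ∧ ∀ x y, D' x y → wv C'.v x y w' = wv C.v x y w at hC'
    by_cases hs : s ∈ R
    · rw [Finset.card_erase_of_mem hs] at hs'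
      have : 0 < R.card := Finset.card_pos.2 ⟨s, hs⟩
      refine ⟨s', by omega, C', ?_⟩
      rintro ⟨n, b⟩ hw
      by_cases hn : n = .gate s
      · subst hn
        obtain ⟨-, w, hw1, hw2⟩ := hR s hs
        obtain ⟨w', h1, h2⟩ := hC' (w.1, xor b w.2) hw1
        refine ⟨w', h1, fun x y h => ?_⟩
        rw [h2 x y h]
        simp [wv, nv, hw2 x y h]
      · apply hC'
        cases n <;> simp_all [ok]
        omega
    · rw [Finset.erase_eq_of_notMem hs] at hs'
      obtain ⟨a1, ha1, hb1⟩ := hC' (C.in1 s) (C.ok1 s (by omega))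
      obtain ⟨a2, ha2, hb2⟩ := hC' (C.in2 s) (C.ok2 s (by omega))
      refine ⟨s' + 1, by omega, ⟨Function.update C'.in1 s' a1, Function.update C'.in2 s' a2,
        Function.update C'.c s' (C.c s), Function.update C'.v s' (C.v s), ?_, ?_, ?_⟩, ?_⟩
      · intro k hk
        by_cases h : k = s'
        · subst h; simpa using ha1
        · simpa [h] using C'.ok1 k (by omega)
      · intro k hk
        by_cases h : k = s'
        · subst h; simpa using ha2
        · simpa [h] using C'.ok2 k (by omega)
      · intro k hk x y hxy
        by_cases h : k = s'
        · subst h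
          simp only [Function.update_self]
          rw [wv_update _ _ _ _ _ ha1, wv_update _ _ _ _ _ ha2, hb1 x y hxy, hb2 x y hxy]
          exact C.eq s (by omega) x y (hD x y hxy)
        · have hks : k < s' := by omega
          simp only [Function.update_of_ne h]
          rw [wv_update _ _ _ _ _ (ok_mono hks.le (C'.ok1 k hks)),
            wv_update _ _ _ _ _ (ok_mono hks.le (C'.ok2 k hks))]
          exact C'.eq k hks x y hxy
      · rintro ⟨n, b⟩ hw
        by_cases hn : n = .gate s
        · subst hn
          exact ⟨(.gate s', b), by simp [ok], fun x y h => by simp [wv, nv]⟩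
        · obtain ⟨w', h1, h2⟩ := hC' (n, b) (by
            cases n <;> simp_all [ok]
            omega)
          refine ⟨w', ok_mono (by omega) h1, fun x y h => ?_⟩
          simp only
          rw [wv_update _ _ _ _ _ h1]
          exact h2 x y h

def Uses {D : (ι → Bool) → Y → Prop} {T : Finset ι} {s : ℕ} (C : Circ D T s) (k : ℕ) (n : Nd ι Y) : Prop :=
  (C.in1 k).1 = n ∨ (C.in2 k).1 = n

theorem rem_of_const1 {D D' : (ι → Bool) → Y → Prop} {T : Finset ι} {s : ℕ} (C : Circ D T s)
    (hD : ∀ x y, D' x y → D x y) {k : ℕ} (hk : k < s) {b : Bool}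
    (h : ∀ x y, D' x y → nv C.v x y (C.in1 k).1 = b) : Rem D' T C.v k := by
  by_cases hb : xor (C.in1 k).2 b = true
  · refine ⟨((C.in2 k).1, xor (C.c k) (C.in2 k).2), C.ok2 k hk, fun x y hxy => ?_⟩
    rw [C.eq k hk x y (hD x y hxy)]
    simp only [wv, h x y hxy, hb, Bool.true_and, Bool.xor_assoc]
  · refine ⟨(.fn (fun _ => false), C.c k), trivial, fun x y hxy => ?_⟩
    rw [C.eq k hk x y (hD x y hxy)]
    simp only [wv, h x y hxy, Bool.eq_false_iff.2 hb, Bool.false_and]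
    rfl

theorem rem_of_uses {D D' : (ι → Bool) → Y → Prop} {T : Finset ι} {s : ℕ} (C : Circ D T s)
    (hD : ∀ x y, D' x y → D x y) {k : ℕ} (hk : k < s) {n : Nd ι Y} (hu : Uses C k n) {b : Bool}
    (h : ∀ x y, D' x y → nv C.v x y n = b) : Rem D' T C.v k := by
  rcases hu with hu | hu
  · exact rem_of_const1 C hD hk (b := b) (by rw [hu]; exact h)
  · exact rem_of_const1 C.swap hD hk (b := b) (by
      change ∀ x y, D' x y → nv C.v x y (C.in2 k).1 = b
      rw [hu]; exact h)

def Dom (T : Finset ι) (a : ι → Bool) (S : Set Y) (x : ι → Bool) (y : Y) : Prop :=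
  y ∈ S ∧ ∀ i, i ∉ T → x i = a i

/-- the output wire `o` computes the parity nondeterministically -/
def Good (P : (ι → Bool) → Bool) (T : Finset ι) (a : ι → Bool) (S : Set Y)
    (o : (ι → Bool) → Y → Bool) : Prop :=
  (∀ x y, Dom T a S x y → P x = false → o x y = false) ∧
  (∀ x, (∀ i, i ∉ T → x i = a i) → P x = true → ∃ y ∈ S, o x y = true)

section
variable [DecidableEq ι]

abbrev flip (x : ι → Bool) (i : ι) : ι → Bool := Function.update x i (!x i)

variable {P : (ι → Bool) → Bool} (hP : ∀ x i, P (flip x i) = !P x)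
include hP

/-- An odd assignment with prescribed value at `i`. -/
theorem exists_par {T : Finset ι} {a : ι → Bool} {i j : ι} (hi : i ∈ T) (hj : j ∈ T) (hij : i ≠ j)
    (b c : Bool) : ∃ x, (∀ i, i ∉ T → x i = a i) ∧ x i = b ∧ P x = c := by
  by_cases h : P (Function.update a i b) = c
  · refine ⟨_, fun k hk => ?_, by simp, h⟩
    have : k ≠ i := by rintro rfl; exact hk hi
    simp [this]
  · refine ⟨flip (Function.update a i b) j, fun k hk => ?_, by simp [hij], ?_⟩
    · have h1 : k ≠ i := by rintro rfl; exact hk hi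
      have h2 : k ≠ j := by rintro rfl; exact hk hj
      simp [h1, h2]
    · rw [hP]
      cases c <;> simp_all

omit hP in
theorem dom_flip {T : Finset ι} {a : ι → Bool} {S : Set Y} {i : ι} (hi : i ∈ T) {x : ι → Bool} {y : Y}
    (h : Dom T a S x y) : Dom T a S (flip x i) y := by
  refine ⟨h.1, fun k hk => ?_⟩
  have h1 : k ≠ i := by rintro rfl; exact hk hi
  simp [h1, h.2 k hk]

/-- The output is sensitive at accepting pairs. -/
theorem sens {T : Finset ι} {a : ι → Bool} {S : Set Y} {o} (hG : Good P T a S o) {i : ι} (hi : i ∈ T)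
    {x : ι → Bool} {y : Y} (h : Dom T a S x y) (ho : o x y = true) : o (flip x i) y ≠ o x y := by
  have hp : P x = true := by
    by_contra hp
    have := hG.1 x y h (by simpa using hp)
    simp_all
  have := hG.1 (flip x i) y (dom_flip hi h) (by rw [hP, hp]; rfl)
  simp_all

omit hP in
theorem good_congr {T : Finset ι} {a : ι → Bool} {S : Set Y} {o o' : (ι → Bool) → Y → Bool}
    (hG : Good P T a S o) (h : ∀ x y, Dom T a S x y → o' x y = o x y) : Good P T a S o' := by
  refine ⟨fun x y hd hp => by rw [h x y hd]; exact hG.1 x y hd hp, fun x hx hp => ?_⟩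
  obtain ⟨y, hy, ho⟩ := hG.2 x hx hp
  exact ⟨y, hy, by rw [h x y ⟨hy, hx⟩]; exact ho⟩

omit hP in
theorem good_fix {T : Finset ι} {a : ι → Bool} {S : Set Y} {o : (ι → Bool) → Y → Bool}
    (hG : Good P T a S o) {i : ι} (b : Bool) (hi : i ∈ T) :
    Good P (T.erase i) (Function.update a i b) S o ∧
    ∀ x y, Dom (T.erase i) (Function.update a i b) S x y → Dom T a S x y ∧ x i = b := by
  have key : ∀ x : ι → Bool, (∀ j, j ∉ T.erase i → x j = Function.update a i b j) →
      (∀ j, j ∉ T → x j = a j) ∧ x i = b := by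
    intro x hx
    refine ⟨fun j hj => ?_, by simpa using hx i (by simp)⟩
    have h1 : j ≠ i := by rintro rfl; exact hj hi
    simpa [h1] using hx j (by simp [hj])
  exact ⟨⟨fun x y hd hp => hG.1 x y ⟨hd.1, (key x hd.2).1⟩ hp,
    fun x hx hp => hG.2 x (key x hx).1 hp⟩, fun x y hd => ⟨⟨hd.1, (key x hd.2).1⟩, (key x hd.2).2⟩⟩

omit hP [DecidableEq ι] in
theorem good_sub {T : Finset ι} {a : ι → Bool} {S S' : Set Y} {o : (ι → Bool) → Y → Bool}
    (hG : Good P T a S o) (hS : S' ⊆ S)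
    (h : ∀ x y, Dom T a S x y → o x y = true → y ∈ S') : Good P T a S' o := by
  refine ⟨fun x y hd hp => hG.1 x y ⟨hS hd.1, hd.2⟩ hp, fun x hx hp => ?_⟩
  obtain ⟨y, hy, ho⟩ := hG.2 x hx hp
  exact ⟨y, h x y ⟨hy, hx⟩ ho, ho⟩

omit hP [DecidableEq ι] in
/-- Only uses of `i` are in gate 0, whose value agrees: everything agrees. -/
theorem agree {D : (ι → Bool) → Y → Prop} {T : Finset ι} {s : ℕ} (C : Circ D T s) {i : ι} {x x' : ι → Bool}
    {y : Y} (hd : D x y) (hd' : D x' y) (hx : ∀ j, j ≠ i → x' j = x j)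
    (h0 : C.v 0 x' y = C.v 0 x y) (hu : ∀ k, 0 < k → k < s → ¬ Uses C k (.var i)) :
    ∀ k < s, C.v k x' y = C.v k x y := by
  intro k
  induction k using Nat.strong_induction_on with
  | _ k ih =>
    intro hk
    rcases Nat.eq_zero_or_pos k with rfl | hpos
    · exact h0
    · have key : ∀ n : Nd ι Y, ok T k n → n ≠ .var i → nv C.v x' y n = nv C.v x y n := by
        intro n hn hne
        cases n with
        | var j => exact hx j (by rintro rfl; exact hne rfl)
        | fn h => rfl
        | gate l => exact ih l hn (lt_trans hn hk)
      have hu' := hu k hpos hk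
      simp only [Uses, not_or] at hu'
      rw [C.eq k hk x y hd, C.eq k hk x' y hd']
      simp only [wv, key _ (C.ok1 k hk) hu'.1, key _ (C.ok2 k hk) hu'.2]

def LB (P : (ι → Bool) → Bool) (Y : Type) (s : ℕ) : Prop :=
  ∀ (T : Finset ι) (a : ι → Bool) (S : Set Y) (C : Circ (Dom T a S) T s) (o : Nd ι Y × Bool),
    ok T s o.1 → Good P T a S (fun x y => wv C.v x y o) → 3 * (T.card - 1) ≤ s

/-- remove gates without fixing variables -/
theorem reduce {s : ℕ} (ih : ∀ s' < s, LB P Y s')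
    {T : Finset ι} {a : ι → Bool} {S S' : Set Y} (C : Circ (Dom T a S) T s) {o : Nd ι Y × Bool}
    (ho : ok T s o.1) (hS : S' ⊆ S) (hG : Good P T a S' (fun x y => wv C.v x y o))
    {k : ℕ} (hk : k < s) (hr : Rem (Dom T a S') T C.v k) : 3 * (T.card - 1) ≤ s := by
  obtain ⟨s', hs', C', hC'⟩ := elim (D' := Dom T a S') (T' := T) (fun x y h => ⟨hS h.1, h.2⟩)
    (fun i h h' => absurd h h') s C {k} (by simp [hk, hr])
  simp at hs'
  obtain ⟨o', h1, h2⟩ := hC' o ho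
  have := ih s' (by omega) T a S' C' o' h1 (good_congr hG h2)
  omega

/-- gate 0 has first input `x_i`. -/
theorem step {s : ℕ} (ih : ∀ s' < s, LB P Y s')
    {T : Finset ι} {a : ι → Bool} {S : Set Y} (C : Circ (Dom T a S) T s) {k0 : ℕ} {ob : Bool}
    (ho : k0 < s) (hG : Good P T a S (fun x y => wv C.v x y (.gate k0, ob)))
    {i j : ι} (hiT : i ∈ T) (hjT : j ∈ T) (hij : i ≠ j) (h0 : (C.in1 0).1 = .var i)
    (hused : ∀ k < s, k ≠ k0 → ∃ l < s, Uses C l (.gate k))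
    : 3 * (T.card - 1) ≤ s := by
  have hs0 : 0 < s := by omega
  have e0 := C.eq 0 hs0
  by_cases hu : ∃ k, 0 < k ∧ k < s ∧ Uses C k (.var i)
  · obtain ⟨k2, hk2, hk2s, hu2⟩ := hu
    obtain ⟨hG', hD'⟩ := good_fix hG (C.in1 0).2 hiT
    set a' := Function.update a i (C.in1 0).2
    set D' := Dom (T.erase i) a' S
    have hDD : ∀ x y, D' x y → Dom T a S x y := fun x y h => (hD' x y h).1
    have hci : ∀ x y, D' x y → nv C.v x y (.var i) = (C.in1 0).2 := fun x y h => (hD' x y h).2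
    have hc0 : ∀ x y, D' x y → nv C.v x y (.gate 0) = C.c 0 := by
      intro x y h
      simp only [nv]
      rw [e0 x y (hDD x y h)]
      simp only [wv, h0, hci x y h]
      simp
    have hout : ∀ b, ¬ ∀ x y, D' x y → nv C.v x y (.gate k0) = b := by
      intro b hb
      obtain ⟨x, hx1, hx2, hx3⟩ := exists_par hP (a := a) hiT hjT hij (C.in1 0).2 true
      obtain ⟨x', hx1', hx2', hx3'⟩ := exists_par hP (a := a) hiT hjT hij (C.in1 0).2 false
      obtain ⟨y, hy, hxy⟩ := hG.2 x hx1 hx3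
      have hxy' := hG.1 x' y ⟨hy, hx1'⟩ hx3'
      have mk : ∀ z : ι → Bool, (∀ i, i ∉ T → z i = a i) → z i = (C.in1 0).2 → D' z y := by
        intro z hz hzi
        refine ⟨hy, fun l hl => ?_⟩
        by_cases hli : l = i
        · subst hli; simp [a', hzi]
        · simp only [a', Function.update_of_ne hli]
          exact hz l (by simpa [hli] using hl)
      simp only [wv, hb x y (mk x hx1 hx2)] at hxy
      simp only [wv, hb x' y (mk x' hx1' hx2')] at hxy'
      simp_all
    have fin : ∀ R : Finset ℕ, R.card = 3 → (∀ k ∈ R, k < s ∧ Rem D' T C.v k) →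
        3 * (T.card - 1) ≤ s := by
      intro R hR hRem
      obtain ⟨s', hs', C', hC'⟩ := elim (D' := D') (T' := T.erase i) hDD
        (fun l hl hl' => ⟨(C.in1 0).2, by
          have : l = i := by by_contra hne; exact hl' (by simp [hne, hl])
          subst this
          exact hci⟩) s C R hRem
      obtain ⟨o', h1, h2⟩ := hC' (.gate k0, ob) ho
      have := ih s' (by omega) _ _ _ C' o' h1 (good_congr hG' h2)
      rw [Finset.card_erase_of_mem hiT] at this
      omega
    have r0 : Rem D' T C.v 0 := rem_of_uses C hDD hs0 (.inl h0) hci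
    have r2 : Rem D' T C.v k2 := rem_of_uses C hDD hk2s hu2 hci
    by_cases h3 : ∃ k3 < s, k3 ≠ k2 ∧ Uses C k3 (.gate 0)
    · obtain ⟨k3, hk3s, hne, hu3⟩ := h3
      have r3 : Rem D' T C.v k3 := rem_of_uses C hDD hk3s hu3 hc0
      have hk3 : k3 ≠ 0 := by
        rintro rfl
        rcases hu3 with h | h
        · have := C.ok1 0 hs0; rw [h] at this; simp [ok] at this
        · have := C.ok2 0 hs0; rw [h] at this; simp [ok] at this
      refine fin {0, k2, k3} ?_ ?_
      · rw [Finset.card_eq_three]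
        exact ⟨0, k2, k3, by omega, by omega, by omega, rfl⟩
      · simp [*]
    · have h00 : 0 ≠ k0 := by
        rintro rfl
        exact hout _ hc0
      obtain ⟨l, hl, hul⟩ := hused 0 hs0 h00
      have hl2 : l = k2 := by
        by_contra hne
        exact h3 ⟨l, hl, hne, hul⟩
      subst hl2
      have hc2 : ∃ b, ∀ x y, D' x y → nv C.v x y (.gate l) = b := by
        have e2 := C.eq l hl
        rcases hu2 with h | h <;> rcases hul with h' | h'
        · rw [h] at h'; cases h'
        · exact ⟨_, fun x y hd => by
            simp only [nv]; rw [e2 x y (hDD x y hd)]; simp only [wv, h, h', hci x y hd, hc0 x y hd]; rfl⟩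
        · exact ⟨_, fun x y hd => by
            simp only [nv]; rw [e2 x y (hDD x y hd)]; simp only [wv, h, h', hci x y hd, hc0 x y hd]; rfl⟩
        · rw [h] at h'; cases h'
      obtain ⟨b, hb⟩ := hc2
      have hlk : l ≠ k0 := by
        rintro rfl
        exact hout _ hb
      obtain ⟨k3, hk3s, hu3⟩ := hused l hl hlk
      have r3 : Rem D' T C.v k3 := rem_of_uses C hDD hk3s hu3 hb
      have hk3 : l < k3 := by
        rcases hu3 with h | h
        · have := C.ok1 k3 hk3s; rw [h] at this; exact this
        · have := C.ok2 k3 hk3s; rw [h] at this; exact this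
      refine fin {0, l, k3} ?_ ?_
      · rw [Finset.card_eq_three]
        exact ⟨0, l, k3, by omega, by omega, by omega, rfl⟩
      · simp [*]
  · push Not at hu
    by_cases hself : (C.in2 0).1 = .var i
    · -- both inputs are `x_i`
      refine reduce hP ih C (o := (.gate k0, ob)) ho le_rfl hG hs0 ?_
      by_cases hpp : (C.in1 0).2 = (C.in2 0).2
      · refine ⟨(.var i, xor (C.c 0) (C.in1 0).2), hiT, fun x y hd => ?_⟩
        rw [e0 x y hd]
        simp only [wv, h0, hself, hpp, Bool.and_self, Bool.xor_assoc]
      · refine ⟨(.fn fun _ => false, C.c 0), trivial, fun x y hd => ?_⟩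
        rw [e0 x y hd]
        simp only [wv, h0, hself, nv]
        revert hpp
        cases (C.in1 0).2 <;> cases (C.in2 0).2 <;> cases x i <;> simp
    -- accepting pairs have the other input nonkilling
    have hinv : ∀ x y, wv C.v (flip x i) y (C.in2 0) = wv C.v x y (C.in2 0) := by
      intro x y
      have hok := C.ok2 0 hs0
      simp only [wv]
      congr 1
      generalize (C.in2 0).1 = n at hok hself
      cases n with
      | var l =>
        have : l ≠ i := by rintro rfl; exact hself rfl
        simp [nv, this]
      | fn h => rfl
      | gate l => simp [ok] at hok
    have hacc : ∀ x y, Dom T a S x y → wv C.v x y (.gate k0, ob) = true →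
        wv C.v x y (C.in2 0) = true := by
      intro x y hd hoxy
      by_contra hw
      have hw := Bool.eq_false_iff.2 hw
      have hd' := dom_flip hiT hd
      have := agree C hd hd' (i := i) (fun l hl => by simp [hl]) (by
        rw [e0 x y hd, e0 _ y hd', hinv, hw]; simp) (fun k hk hks => hu k hk hks) k0 ho
      apply sens hP hG hiT hd hoxy
      simp only [wv, nv, this]
    have hok := C.ok2 0 hs0
    rcases hn : (C.in2 0).1 with l | h | l
    · exfalso
      rw [hn] at hok
      have hil : l ≠ i := by rintro rfl; exact hself hn
      obtain ⟨x, hx1, hx2, hx3⟩ := exists_par hP (a := a) hok hiT hil (C.in2 0).2 true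
      obtain ⟨y, hy, hxy⟩ := hG.2 x hx1 hx3
      have := hacc x y ⟨hy, hx1⟩ hxy
      simp [wv, hn, nv, hx2] at this
    · refine reduce hP ih C (o := (.gate k0, ob)) (S' := {y ∈ S | xor (C.in2 0).2 (h y) = true})
        ho (fun y hy => hy.1) (good_sub hG (fun y hy => hy.1) ?_) hs0 ?_
      · intro x y hd hoxy
        have := hacc x y hd hoxy
        simp only [wv, hn, nv] at this
        exact ⟨hd.1, this⟩
      · refine ⟨(.var i, xor (C.c 0) (C.in1 0).2), hiT, fun x y hd => ?_⟩
        rw [e0 x y ⟨hd.1.1, hd.2⟩]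
        simp only [wv, h0, hn, nv, hd.1.2, Bool.and_true, Bool.xor_assoc]
    · rw [hn] at hok; simp [ok] at hok

theorem lower (s : ℕ) : LB P Y s := by
  induction s using Nat.strong_induction_on with
  | _ s ih =>
    intro T a S C o ho hG
    by_cases hT : T.card ≤ 1
    · omega
    obtain ⟨i, hi, j, hj, hij⟩ := Finset.one_lt_card.1 (by omega : 1 < T.card)
    -- an accepting pair
    obtain ⟨x, hx1, hx2, hx3⟩ := exists_par hP (a := a) hi hj hij true true
    obtain ⟨y, hy, hxy⟩ := hG.2 x hx1 hx3
    obtain ⟨n, ob⟩ := o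
    cases n with
    | var l =>
      exfalso
      obtain ⟨k, hk, hkl⟩ : ∃ k ∈ T, k ≠ l := by
        by_cases h : i = l
        · exact ⟨j, hj, by rw [← h]; exact hij.symm⟩
        · exact ⟨i, hi, h⟩
      apply sens hP hG hk ⟨hy, hx1⟩ hxy
      simp [wv, nv, hkl.symm]
    | fn h =>
      exfalso
      apply sens hP hG hi ⟨hy, hx1⟩ hxy
      simp [wv, nv]
    | gate k0 =>
      change k0 < s at ho
      have hs0 : 0 < s := by omega
      by_cases hused : ∀ k < s, k ≠ k0 → ∃ l < s, Uses C l (.gate k)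
      · have hok1 := C.ok1 0 hs0
        have hok2 := C.ok2 0 hs0
        have other : ∀ l, ∃ k ∈ T, l ≠ k := by
          intro l
          by_cases h : i = l
          · exact ⟨j, hj, by rw [← h]; exact hij⟩
          · exact ⟨i, hi, Ne.symm h⟩
        rcases h1 : (C.in1 0).1 with l | h | l
        · rw [h1] at hok1
          obtain ⟨k, hk, hlk⟩ := other l
          exact step hP ih C ho hG hok1 hk hlk h1 hused
        · rcases h2 : (C.in2 0).1 with l' | h' | l'
          · rw [h2] at hok2
            obtain ⟨k, hk, hlk⟩ := other l'
            exact step hP ih C.swap ho hG hok2 hk hlk h2 (by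
              intro k hk hne
              obtain ⟨l, hl, hu⟩ := hused k hk hne
              exact ⟨l, hl, hu.symm⟩)
          · refine reduce hP ih C (o := (.gate k0, ob)) ho le_rfl hG hs0
              ⟨(.fn fun y => xor (C.in1 0).2 (h y) && xor (C.in2 0).2 (h' y), C.c 0), trivial,
                fun x y hd => ?_⟩
            rw [C.eq 0 hs0 x y hd]
            simp only [wv, nv, h1, h2]
          · rw [h2] at hok2; simp [ok] at hok2
        · rw [h1] at hok1; simp [ok] at hok1
      · -- a dead gate
        push Not at hused
        obtain ⟨k, hk, hne, hdead⟩ := hused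
        have hnv : ∀ x y (n : Nd ι Y), n ≠ .gate k →
            nv (Function.update C.v k (fun _ _ => false)) x y n = nv C.v x y n := by
          intro x y n hn
          cases n with
          | var i => rfl
          | fn h => rfl
          | gate l =>
            have : l ≠ k := by rintro rfl; exact hn rfl
            simp [nv, this]
        let C' : Circ (Dom T a S) T s :=
          { in1 := Function.update C.in1 k (.fn fun _ => false, false)
            in2 := C.in2
            c := Function.update C.c k false
            v := Function.update C.v k (fun _ _ => false)
            ok1 := by
              intro l hl
              by_cases h : l = k
              · subst h; simp [ok]
              · simpa [h] using C.ok1 l hl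
            ok2 := C.ok2
            eq := by
              intro l hl x y hd
              have hd' := hdead l hl
              simp only [Uses, not_or] at hd'
              by_cases h : l = k
              · subst h; simp [wv, nv]
              · simp only [Function.update_of_ne h, wv, hnv _ _ _ hd'.1, hnv _ _ _ hd'.2]
                exact C.eq l hl x y hd }
        refine reduce hP ih C' (o := (.gate k0, ob)) ho le_rfl (good_congr hG ?_) hk
          ⟨(.fn fun _ => false, false), trivial, fun x y hd => ?_⟩
        · intro x y hd
          simp [C', wv, nv, hne.symm]
        · simp [C', wv, nv]

end

theorem u2_form (f : Bool → Bool → Bool) (hf : IsU2 f) : ∃ c k1 p k2 q : Bool, ∀ a b,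
    f a b = xor c (xor p (k1 && a) && xor q (k2 && b)) := by
  obtain ⟨h1, h2⟩ := hf
  have key : ∀ f00 f01 f10 f11 : Bool,
      (f00 = false ∧ f01 = true ∧ f10 = true ∧ f11 = false) ∨
      (f00 = true ∧ f01 = false ∧ f10 = false ∧ f11 = true) ∨
      ∃ c k1 p k2 q : Bool,
        f00 = xor c (xor p (k1 && false) && xor q (k2 && false)) ∧
        f01 = xor c (xor p (k1 && false) && xor q (k2 && true)) ∧
        f10 = xor c (xor p (k1 && true) && xor q (k2 && false)) ∧
        f11 = xor c (xor p (k1 && true) && xor q (k2 && true)) := by decide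
  rcases key (f false false) (f false true) (f true false) (f true true) with h | h | h
  · exfalso; apply h1; funext a b; cases a <;> cases b <;> simp [h]
  · exfalso; apply h2; funext a b; cases a <;> cases b <;> simp [h]
  · obtain ⟨c, k1, p, k2, q, h⟩ := h
    refine ⟨c, k1, p, k2, q, fun a b => ?_⟩
    cases a <;> cases b
    · exact h.1
    · exact h.2.1
    · exact h.2.2.1
    · exact h.2.2.2

def conv {n m k : ℕ} : ((Fin n ⊕ Fin m) ⊕ Bool) ⊕ Fin k → Nd (Fin n) (Fin m → Bool)
  | .inl (.inl (.inl i)) => .var i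
  | .inl (.inl (.inr j)) => .fn fun y => y j
  | .inl (.inr b) => .fn fun _ => b
  | .inr h => .gate h.val

def mkWire {n m k : ℕ} (κ p : Bool) (w : ((Fin n ⊕ Fin m) ⊕ Bool) ⊕ Fin k) :
    Nd (Fin n) (Fin m → Bool) × Bool :=
  if κ then (conv w, p) else (.fn fun _ => false, p)

theorem ok_conv {n m k : ℕ} (w : ((Fin n ⊕ Fin m) ⊕ Bool) ⊕ Fin k) :
    ok Finset.univ k (conv w) := by
  rcases w with ((i | j) | b) | h
  · exact Finset.mem_univ _
  · trivial
  · trivial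
  · exact h.isLt

theorem ok_mkWire {n m k : ℕ} (κ p : Bool) (w : ((Fin n ⊕ Fin m) ⊕ Bool) ⊕ Fin k) :
    ok Finset.univ k (mkWire κ p w).1 := by
  unfold mkWire
  split
  · exact ok_conv w
  · trivial

theorem parity_flip (n : ℕ) (x : Fin n → Bool) (i : Fin n) : parity n (flip x i) = !parity n x := by
  unfold parity
  rw [← Finset.add_sum_erase _ _ (Finset.mem_univ i), ← Finset.add_sum_erase _ (fun j => (x j).toNat) (Finset.mem_univ i)]
  have : ∑ j ∈ Finset.univ.erase i, (flip x i j).toNat = ∑ j ∈ Finset.univ.erase i, (x j).toNat := by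
    apply Finset.sum_congr rfl
    intro j hj
    simp [Finset.ne_of_mem_erase hj]
  rw [this]
  generalize ∑ j ∈ Finset.univ.erase i, (x j).toNat = t
  simp only [flip, Function.update_self]
  rcases Nat.mod_two_eq_zero_or_one t with h | h <;> cases x i <;> simp [Nat.add_mod, h]

theorem lower_bound {n m : ℕ} (C : Circuit (Fin n ⊕ Fin m)) (hU : C.IsU2Circuit)
    (hC : C.ComputesND (parity n)) : 3 * (n - 1) ≤ C.size := by
  choose c k1 p k2 q hf using fun g => u2_form _ (hU g)
  let v : ℕ → (Fin n → Bool) → (Fin m → Bool) → Bool := fun k x y =>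
    if h : k < C.size then C.nodeVal (Sum.elim x y) ⟨k, h⟩ else false
  have hconv : ∀ (k : ℕ) (hk : k ≤ C.size) (w : ((Fin n ⊕ Fin m) ⊕ Bool) ⊕ Fin k) x y,
      nv v x y (conv w) = (match w with
       | .inl (.inl i) => Sum.elim x y i
       | .inl (.inr b) => b
       | .inr h => C.nodeVal (Sum.elim x y) ⟨h.val, h.isLt.trans_le hk⟩) := by
    intro k hk w x y
    rcases w with ((i | j) | b) | h
    · rfl
    · rfl
    · rfl
    · have : h.val < C.size := h.isLt.trans_le hk
      simp [conv, nv, v, this]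
  have hmk : ∀ (k : ℕ) κ p (w : ((Fin n ⊕ Fin m) ⊕ Bool) ⊕ Fin k) x y,
      wv v x y (mkWire κ p w) = xor p (κ && nv v x y (conv w)) := by
    intro k κ p w x y
    cases κ <;> simp [mkWire, wv, nv]
  let D : Circ (Dom (Finset.univ : Finset (Fin n)) (fun _ => false) (Set.univ : Set (Fin m → Bool)))
      Finset.univ C.size :=
    { in1 := fun k => if h : k < C.size then mkWire (k1 ⟨k, h⟩) (p ⟨k, h⟩) (C.in1 ⟨k, h⟩)
        else (.fn fun _ => false, false)
      in2 := fun k => if h : k < C.size then mkWire (k2 ⟨k, h⟩) (q ⟨k, h⟩) (C.in2 ⟨k, h⟩)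
        else (.fn fun _ => false, false)
      c := fun k => if h : k < C.size then c ⟨k, h⟩ else false
      v := v
      ok1 := fun k hk => by simp only [hk, dif_pos]; exact ok_mkWire _ _ _
      ok2 := fun k hk => by simp only [hk, dif_pos]; exact ok_mkWire _ _ _
      eq := fun k hk x y _ => by
        simp only [hk, dif_pos, hmk]
        rw [← hf, hconv k hk.le, hconv k hk.le]
        simp only [v, hk, dif_pos]
        rw [Circuit.nodeVal]
        congr 1
        · rcases C.in1 ⟨k, hk⟩ with (i | b) | h <;> rfl
        · rcases C.in2 ⟨k, hk⟩ with (i | b) | h <;> rfl }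
  have hout : ∀ x y, nv v x y (conv C.out) = C.eval (Sum.elim x y) := by
    intro x y
    rw [hconv _ le_rfl, Circuit.eval]
    rcases C.out with (i | b) | h <;> rfl
  have := lower (parity_flip n) C.size _ _ _ D (conv C.out, false) (ok_conv _) (by
    have hw : ∀ x y, wv D.v x y (conv C.out, false) = C.eval (Sum.elim x y) := by
      intro x y
      rw [← hout]; simp [wv, D]
    simp only [Good, hw]
    refine ⟨fun x y _ hp => ?_, fun x _ hp => ?_⟩
    · by_contra h
      have := (hC x).2 ⟨y, by simpa using h⟩
      simp_all
    · obtain ⟨y, hy⟩ := (hC x).1 hp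
      exact ⟨y, trivial, hy⟩)
  simpa using this

/-- The standard circuit. -/
def parC (n : ℕ) (hn : 2 ≤ n) : Circuit (Fin n ⊕ Fin 0) where
  size := 3 * (n - 1)
  gate := fun g a b => if g.val % 3 = 0 then a && !b else if g.val % 3 = 1 then !a && b else a || b
  in1 := fun g => if h : g.val % 3 = 2 then .inr ⟨g.val - 2, by omega⟩
    else if h' : g.val < 3 then .inl (.inl (.inl ⟨0, by omega⟩))
    else .inr ⟨3 * (g.val / 3) - 1, by omega⟩
  in2 := fun g => if h : g.val % 3 = 2 then .inr ⟨g.val - 1, by omega⟩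
    else .inl (.inl (.inl ⟨g.val / 3 + 1, by have := g.isLt; omega⟩))
  out := .inr ⟨3 * (n - 1) - 1, by omega⟩

theorem parC_u2 (n : ℕ) (hn : 2 ≤ n) : (parC n hn).IsU2Circuit := by
  intro g
  have : g.val % 3 = 0 ∨ g.val % 3 = 1 ∨ g.val % 3 = 2 := by omega
  rcases this with h | h | h
  · constructor <;> intro h'
    · have := congrFun (congrFun h' false) true; simp [parC, h] at this
    · have := congrFun (congrFun h' false) false; simp [parC, h] at this
  · constructor <;> intro h'
    · have := congrFun (congrFun h' true) false; simp [parC, h] at this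
    · have := congrFun (congrFun h' false) false; simp [parC, h] at this
  · constructor <;> intro h'
    · have := congrFun (congrFun h' true) true; simp [parC, h] at this
    · have := congrFun (congrFun h' false) false; simp [parC, h] at this

def pz {n : ℕ} (x : Fin n → Bool) : (t : ℕ) → t < n → Bool
  | 0, h => x ⟨0, h⟩
  | t + 1, h => xor (pz x t (by omega)) (x ⟨t + 1, h⟩)

theorem parC_val (n : ℕ) (hn : 2 ≤ n) (x : Fin n → Bool) (y : Fin 0 → Bool) (t : ℕ) (ht : t + 1 < n) :
    (parC n hn).nodeVal (Sum.elim x y) ⟨3 * t + 2, by change _ < 3 * (n - 1); omega⟩ = pz x (t + 1) ht := by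
  induction t with
  | zero =>
    rw [Circuit.nodeVal]
    simp [parC]
    rw [Circuit.nodeVal, Circuit.nodeVal]
    simp [pz]
    cases x ⟨0, by omega⟩ <;> cases x ⟨1, by omega⟩ <;> rfl
  | succ t ih =>
    have ih := ih (by omega)
    have h1 : (3 * (t + 1) + 2) % 3 = 2 := by omega
    have h2 : (3 * (t + 1) + 1) % 3 = 1 := by omega
    have h3 : (3 * (t + 1)) % 3 = 0 := by omega
    have h4 : (3 * (t + 1)) / 3 = t + 1 := by omega
    have h5 : (3 * (t + 1) + 1) / 3 = t + 1 := by omega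
    have h6 : 3 * (t + 1) - 1 = 3 * t + 2 := by omega
    have A : (parC n hn).nodeVal (Sum.elim x y) ⟨3 * (t + 1), by change _ < 3 * (n - 1); omega⟩
        = (pz x (t + 1) (by omega) && !x ⟨t + 1 + 1, ht⟩) := by
      rw [Circuit.nodeVal, ← ih]
      have : ¬ (3 * (t + 1) < 3) := by omega
      simp [parC, this, h6]
    have B : (parC n hn).nodeVal (Sum.elim x y) ⟨3 * (t + 1) + 1, by change _ < 3 * (n - 1); omega⟩
        = (!pz x (t + 1) (by omega) && x ⟨t + 1 + 1, ht⟩) := by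
      rw [Circuit.nodeVal, ← ih]
      have : ¬ (3 * (t + 1) + 1 < 3) := by omega
      simp [parC, this, h2, h5, h6]
    rw [Circuit.nodeVal]
    have C : ∀ a b : Bool, (parC n hn).gate ⟨3 * (t + 1) + 2, by change _ < 3 * (n - 1); omega⟩ a b
      = (a || b) := by intro a b; simp [parC, h1]
    have E1 : (parC n hn).in1 ⟨3 * (t + 1) + 2, by change _ < 3 * (n - 1); omega⟩
      = .inr ⟨3 * (t + 1), by simp⟩ := by simp [parC, h1]
    have E2 : (parC n hn).in2 ⟨3 * (t + 1) + 2, by change _ < 3 * (n - 1); omega⟩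
      = .inr ⟨3 * (t + 1) + 1, by simp⟩ := by simp [parC, h1]
    rw [C, E1, E2]
    simp only
    rw [A, B]
    simp only [pz]
    generalize xor (pz x t _) _ = u
    cases u <;> cases x ⟨t + 1 + 1, ht⟩ <;> rfl

theorem pz_eq {n : ℕ} (x : Fin n → Bool) (t : ℕ) (ht : t < n) :
    pz x t ht = parity (t + 1) (fun i => x ⟨i.val, by omega⟩) := by
  induction t with
  | zero => simp only [pz, parity]; simp; cases x ⟨0, ht⟩ <;> simp
  | succ t ih =>
    rw [pz, ih (by omega)]
    unfold parity
    rw [Fin.sum_univ_castSucc (n := t + 1)]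
    simp only [Fin.val_castSucc, Fin.val_last]
    generalize (∑ i : Fin (t + 1), (x ⟨i.val, by omega⟩).toNat) = u
    rcases Nat.mod_two_eq_zero_or_one u with h | h <;> cases x ⟨t + 1, ht⟩ <;> simp [Nat.add_mod, h]

theorem parC_eval (n : ℕ) (hn : 2 ≤ n) (x : Fin n → Bool) (y : Fin 0 → Bool) :
    (parC n hn).eval (Sum.elim x y) = parity n x := by
  obtain ⟨t, rfl⟩ : ∃ t, n = t + 2 := ⟨n - 2, by omega⟩
  have := parC_val (t + 2) hn x y t (by omega)
  rw [pz_eq] at this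
  exact this

end NDP

/-- For every `n ≥ 2`, the minimum size of a nondeterministic
`U₂`-circuit computing `Parity_n` equals `3(n-1)`; in particular nondeterminism
cannot reduce the `U₂`-circuit size of parity below the deterministic optimum. -/
theorem sizeNDC_parity (n : ℕ) (hn : 2 ≤ n) : sizeNDC (parity n) = 3 * (n - 1) := by
  refine le_antisymm (Nat.sInf_le ?_) (le_csInf ?_ ?_)
  · exact ⟨0, NDP.parC n hn, NDP.parC_u2 n hn, fun x => by simp [NDP.parC_eval], rfl⟩
  · exact ⟨_, 0, NDP.parC n hn, NDP.parC_u2 n hn, fun x => by simp [NDP.parC_eval], rfl⟩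
  · rintro s ⟨m, C, hU, hC, rfl⟩
    exact NDP.lower_bound C hU hC
end

section
/- For every n ≥ 2, every nondeterministic U_2-circuit computing the parity function Parity_n (with any number of guess inputs) has at least 3(n-1) gates. -/
namespace PND

/-- literal : node together with a sign; node `0` is the constant false -/
abbrev Lit := ℕ × Bool

def lv (v : ℕ → Bool) (l : Lit) : Bool := xor (v l.1) l.2

structure Sys where
  S : Finset ℕ
  T : Finset ℕ
  a : ℕ → Lit
  b : ℕ → Lit
  o : ℕ → Lit

def Sys.ok (P : Sys) (v : ℕ → Bool) : Prop :=
  v 0 = false ∧ (∀ g ∈ P.S, v g = (lv v (P.a g) && lv v (P.b g))) ∧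
    ∀ t ∈ P.T, lv v (P.o t) = true

def par (X : Finset ℕ) (v : ℕ → Bool) : ZMod 2 := ∑ i ∈ X, ((v i).toNat : ZMod 2)

structure Good (P : Sys) (X : Finset ℕ) (c : ZMod 2) : Prop where
  ord : ∀ g ∈ P.S, (P.a g).1 < g ∧ (P.b g).1 < g
  x0 : 0 ∉ X
  disj : ∀ i ∈ X, i ∉ P.S
  snd : ∀ v, P.ok v → par X v = c
  cpl : ∀ x, par X x = c → ∃ v, P.ok v ∧ ∀ i ∈ X, v i = x i

def tch (P : Sys) (g n : ℕ) : Prop := (P.a g).1 = n ∨ (P.b g).1 = n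

def sub (n : ℕ) (l k : Lit) : Lit := if k.1 = n then (l.1, xor l.2 k.2) else k

def sb (P : Sys) (n : ℕ) (l : Lit) : Sys where
  S := P.S.erase n
  T := P.T
  a := fun g => sub n l (P.a g)
  b := fun g => sub n l (P.b g)
  o := fun g => sub n l (P.o g)

lemma lv_sub_eq {v : ℕ → Bool} {n : ℕ} {l : Lit} (h : lv v l = v n) (k : Lit) :
    lv v (sub n l k) = lv v k := by
  unfold sub
  split_ifs with hk
  · subst hk; simp only [lv] at *; rw [← h]; simp
  · rfl

lemma lv_upd {v : ℕ → Bool} {n : ℕ} {l : Lit} (k : Lit) :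
    lv (Function.update v n (lv v l)) k = lv v (sub n l k) := by
  unfold sub
  split_ifs with hk
  · subst hk; simp [lv]
  · simp [lv, Function.update_of_ne hk]

lemma lv_upd_ne {v : ℕ → Bool} {n : ℕ} {β : Bool} {k : Lit} (hk : k.1 ≠ n) :
    lv (Function.update v n β) k = lv v k := by
  simp [lv, Function.update_of_ne hk]

lemma par_congr {X : Finset ℕ} {v w : ℕ → Bool} (h : ∀ i ∈ X, v i = w i) :
    par X v = par X w :=
  Finset.sum_congr rfl (fun i hi => by rw [h i hi])

lemma par_upd_not {X : Finset ℕ} {v : ℕ → Bool} {n : ℕ} {β : Bool} (h : n ∉ X) :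
    par X (Function.update v n β) = par X v :=
  par_congr (fun i hi => Function.update_of_ne (fun e : i = n => h (e ▸ hi)) _ _)

lemma par_erase {X : Finset ℕ} {v : ℕ → Bool} {n : ℕ} (h : n ∈ X) :
    par X v = ((v n).toNat : ZMod 2) + par (X.erase n) v :=
  (Finset.add_sum_erase _ _ h).symm

lemma par_upd {X : Finset ℕ} {v : ℕ → Bool} {n : ℕ} {β : Bool} (h : n ∈ X) :
    par X (Function.update v n β) = (β.toNat : ZMod 2) + par (X.erase n) v := by
  rw [par_erase h, par_upd_not (Finset.notMem_erase n X)]; simp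

lemma exists_bit (d : ZMod 2) : ∃ β : Bool, (β.toNat : ZMod 2) = d := by
  revert d; decide

lemma bit_ne (β : Bool) (d : ZMod 2) : ((!β).toNat : ZMod 2) + d ≠ (β.toNat : ZMod 2) + d := by
  revert β d; decide

lemma exists_par {X : Finset ℕ} (hX : X.Nonempty) (x : ℕ → Bool) (c : ZMod 2) :
    ∃ j ∈ X, ∃ β, par X (Function.update x j β) = c := by
  obtain ⟨j, hj⟩ := hX
  obtain ⟨β, hβ⟩ := exists_bit (c - par (X.erase j) x)
  exact ⟨j, hj, β, by rw [par_upd hj, hβ]; ring⟩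

lemma Good.exists_ok {P X c} (h : Good P X c) (hX : X.Nonempty) : ∃ v, P.ok v := by
  obtain ⟨j, hj, β, hβ⟩ := exists_par hX (fun _ => false) c
  obtain ⟨v, hv, -⟩ := h.cpl _ hβ
  exact ⟨v, hv⟩

lemma Good.exists_val {P X c} (h : Good P X c) (hX : 2 ≤ X.card) {i : ℕ} (hi : i ∈ X) (β : Bool) :
    ∃ v, P.ok v ∧ v i = β := by
  have hne : (X.erase i).Nonempty := by
    rw [← Finset.card_pos, Finset.card_erase_of_mem hi]; omega
  obtain ⟨j, hj, γ, hγ⟩ := exists_par hne (fun _ => β) (c - (β.toNat : ZMod 2))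
  have hji := Finset.ne_of_mem_erase hj
  have : par X (Function.update (fun _ => β) j γ) = c := by
    rw [par_erase hi, hγ, Function.update_of_ne hji.symm]; ring
  obtain ⟨v, hv, h2⟩ := h.cpl _ this
  exact ⟨v, hv, by rw [h2 i hi, Function.update_of_ne hji.symm]⟩

/-- erasing a gate that is computed by a literal -/
lemma Good.sb {P X c} (h : Good P X c) {g : ℕ} (hg : g ∈ P.S) {l : Lit} (hl : l.1 < g)
    (hv : ∀ v : ℕ → Bool, v 0 = false → lv v l = (lv v (P.a g) && lv v (P.b g))) :
    Good (sb P g l) X c := by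
  have g0 : g ≠ 0 := by omega
  have hgX : g ∉ X := fun hx => h.disj g hx hg
  have hsub : ∀ k : Lit, ∀ m, k.1 < m → (sub g l k).1 < m := by
    intro k m hk; unfold sub; split_ifs <;> (try simp only []) <;> omega
  refine ⟨?_, h.x0, ?_, ?_, ?_⟩
  · intro k hk
    have := h.ord k (Finset.mem_of_mem_erase hk)
    exact ⟨hsub _ _ this.1, hsub _ _ this.2⟩
  · intro i hi hm; exact h.disj i hi (Finset.mem_of_mem_erase hm)
  · rintro v ⟨v0, vs, vt⟩
    rw [← par_upd_not (v := v) (β := lv v l) hgX]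
    apply h.snd
    refine ⟨by rw [Function.update_of_ne g0.symm]; exact v0, ?_, ?_⟩
    · intro k hk
      rcases eq_or_ne k g with rfl | hkg
      · rw [Function.update_self, lv_upd_ne (h.ord k hk).1.ne, lv_upd_ne (h.ord k hk).2.ne]
        exact hv v v0
      · rw [Function.update_of_ne hkg, lv_upd, lv_upd]
        exact vs k (Finset.mem_erase.2 ⟨hkg, hk⟩)
    · intro t ht; rw [lv_upd]; exact vt t ht
  · intro x hx
    obtain ⟨v, ⟨v0, vs, vt⟩, hvx⟩ := h.cpl x hx
    have e : lv v l = v g := by rw [hv v v0, vs g hg]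
    refine ⟨v, ⟨v0, ?_, ?_⟩, hvx⟩
    · intro k hk
      show _ = (lv v (sub g l _) && lv v (sub g l _))
      rw [lv_sub_eq e, lv_sub_eq e]; exact vs k (Finset.mem_of_mem_erase hk)
    · intro t ht
      show lv v (sub g l _) = _
      rw [lv_sub_eq e]; exact vt t ht

/-- fixing an input -/
lemma Good.fix {P X c} (h : Good P X c) {i : ℕ} (hi : i ∈ X) (β : Bool) :
    Good (PND.sb P i (0, β)) (X.erase i) (c - (β.toNat : ZMod 2)) := by
  have i0 : i ≠ 0 := fun e => h.x0 (e ▸ hi)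
  have hsub : ∀ k : Lit, ∀ m, k.1 < m → (sub i (0, β) k).1 < m := by
    intro k m hk; unfold sub; split_ifs <;> (try simp only []) <;> omega
  refine ⟨?_, fun hx => h.x0 (Finset.mem_of_mem_erase hx), ?_, ?_, ?_⟩
  · intro k hk
    have := h.ord k (Finset.mem_of_mem_erase hk)
    exact ⟨hsub _ _ this.1, hsub _ _ this.2⟩
  · intro i hi hm
    exact h.disj i (Finset.mem_of_mem_erase hi) (Finset.mem_of_mem_erase hm)
  · rintro v ⟨v0, vs, vt⟩
    have e : lv v (0, β) = β := by simp [lv, v0]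
    have : P.ok (Function.update v i (lv v (0, β))) := by
      refine ⟨by rw [Function.update_of_ne i0.symm]; exact v0, ?_, ?_⟩
      · intro k hk
        have hki : k ≠ i := fun e => h.disj i hi (e ▸ hk)
        rw [Function.update_of_ne hki, lv_upd, lv_upd]
        exact vs k (Finset.mem_erase.2 ⟨hki, hk⟩)
      · intro t ht; rw [lv_upd]; exact vt t ht
    have := h.snd _ this
    rw [par_upd hi, e] at this
    rw [← this]; ring
  · intro x hx
    have : par X (Function.update x i β) = c := by rw [par_upd hi, hx]; ring
    obtain ⟨v, ⟨v0, vs, vt⟩, hvx⟩ := h.cpl _ this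
    have e : lv v (0, β) = v i := by rw [hvx i hi]; simp [lv, v0]
    refine ⟨v, ⟨v0, ?_, ?_⟩, ?_⟩
    · intro k hk
      show _ = (lv v (sub i _ _) && lv v (sub i _ _))
      rw [lv_sub_eq e, lv_sub_eq e]; exact vs k (Finset.mem_of_mem_erase hk)
    · intro t ht
      show lv v (sub i _ _) = _
      rw [lv_sub_eq e]; exact vt t ht
    · intro j hj
      rw [hvx j (Finset.mem_of_mem_erase hj), Function.update_of_ne (Finset.ne_of_mem_erase hj)]

/-- erasing an unused gate -/
lemma Good.drop {P X c} (h : Good P X c) {g : ℕ} (hg : g ∈ P.S)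
    (h1 : ∀ k ∈ P.S, ¬ tch P k g) (h2 : ∀ t ∈ P.T, (P.o t).1 ≠ g) :
    Good { P with S := P.S.erase g } X c := by
  have g0 : g ≠ 0 := by have := h.ord g hg; omega
  have hgX : g ∉ X := fun hx => h.disj g hx hg
  refine ⟨fun k hk => h.ord k (Finset.mem_of_mem_erase hk), h.x0,
    fun i hi hm => h.disj i hi (Finset.mem_of_mem_erase hm), ?_, ?_⟩
  · rintro v ⟨v0, vs, vt⟩
    rw [← par_upd_not (v := v) (β := lv v (P.a g) && lv v (P.b g)) hgX]
    apply h.snd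
    refine ⟨by rw [Function.update_of_ne g0.symm]; exact v0, ?_, ?_⟩
    · intro k hk
      have := h1 k hk
      simp only [tch, not_or] at this
      rw [lv_upd_ne this.1, lv_upd_ne this.2]
      rcases eq_or_ne k g with rfl | hkg
      · simp
      · rw [Function.update_of_ne hkg]
        exact vs k (Finset.mem_erase.2 ⟨hkg, hk⟩)
    · intro t ht; rw [lv_upd_ne (h2 t ht)]; exact vt t ht
  · intro x hx
    obtain ⟨v, ⟨v0, vs, vt⟩, hvx⟩ := h.cpl x hx
    exact ⟨v, ⟨v0, fun k hk => vs k (Finset.mem_of_mem_erase hk), vt⟩, hvx⟩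

/-- erasing a constant output -/
lemma Good.dropOut {P X c} (h : Good P X c) (hX : X.Nonempty) {t : ℕ} (ht : t ∈ P.T)
    (h0 : (P.o t).1 = 0) : Good { P with T := P.T.erase t } X c := by
  obtain ⟨w, w0, -, wt⟩ := h.exists_ok hX
  have hs : (P.o t).2 = true := by have := wt t ht; simpa [lv, h0, w0] using this
  refine ⟨h.ord, h.x0, h.disj, ?_, ?_⟩
  · rintro v ⟨v0, vs, vt⟩
    apply h.snd
    refine ⟨v0, vs, fun s hs' => ?_⟩
    rcases eq_or_ne s t with rfl | hst
    · simp [lv, h0, v0, hs]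
    · exact vt s (Finset.mem_erase.2 ⟨hst, hs'⟩)
  · intro x hx
    obtain ⟨v, ⟨v0, vs, vt⟩, hvx⟩ := h.cpl x hx
    exact ⟨v, ⟨v0, vs, fun k hk => vt k (Finset.mem_of_mem_erase hk)⟩, hvx⟩

/-- flipping an input -/
lemma Good.flip {P X c} (h : Good P X c) {i : ℕ} (hi : i ∈ X) {v : ℕ → Bool} (hv : P.ok v)
    (h2 : ∀ t ∈ P.T, (P.o t).1 ≠ i)
    (h1 : ∀ g ∈ P.S, tch P g i → ((P.a g).1 ≠ i ∧ lv v (P.a g) = false) ∨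
      ((P.b g).1 ≠ i ∧ lv v (P.b g) = false)) : False := by
  have i0 : i ≠ 0 := fun e => h.x0 (e ▸ hi)
  have e1 := h.snd v hv
  obtain ⟨v0, vs, vt⟩ := hv
  have : P.ok (Function.update v i (!v i)) := by
    refine ⟨by rw [Function.update_of_ne i0.symm]; exact v0, ?_, ?_⟩
    · intro k hk
      have hki : k ≠ i := fun e => h.disj i hi (e ▸ hk)
      rw [Function.update_of_ne hki, vs k hk]
      by_cases ht : tch P k i
      · rcases h1 k hk ht with ⟨p, q⟩ | ⟨p, q⟩
        · rw [lv_upd_ne p, q]; simp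
        · rw [lv_upd_ne p, q]; simp
      · simp only [tch, not_or] at ht
        rw [lv_upd_ne ht.1, lv_upd_ne ht.2]
    · intro t ht; rw [lv_upd_ne (h2 t ht)]; exact vt t ht
  have := h.snd _ this
  rw [par_upd hi, ← e1, par_erase hi] at this
  exact bit_ne _ _ this

def mv (P : Sys) (g : ℕ) (l k : Lit) (t : ℕ) : Sys :=
  { sb P g l with T := insert t P.T, o := Function.update (sb P g l).o t k }

lemma Good.mv {P X c} (h : Good P X c) {g : ℕ} (hg : g ∈ P.S) {l k : Lit}
    (hlk : (P.a g = l ∧ P.b g = k) ∨ (P.a g = k ∧ P.b g = l)) {t : ℕ} (ht : t ∉ P.T)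
    (hk : ∀ v, P.ok v → lv v k = true) : Good (mv P g l k t) X c := by
  have hgX : g ∉ X := fun hx => h.disj g hx hg
  have hl : l.1 < g := by
    have := h.ord g hg
    rcases hlk with ⟨p, q⟩ | ⟨p, q⟩ <;> rw [p, q] at this <;> omega
  have hkg : k.1 < g := by
    have := h.ord g hg
    rcases hlk with ⟨p, q⟩ | ⟨p, q⟩ <;> rw [p, q] at this <;> omega
  have hv : ∀ v, lv v k = true → lv v l = (lv v (P.a g) && lv v (P.b g)) := by
    intro v e
    rcases hlk with ⟨p, q⟩ | ⟨p, q⟩ <;> rw [p, q, e] <;> simp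
  have g0 : g ≠ 0 := by omega
  have hsub : ∀ k : Lit, ∀ m, k.1 < m → (sub g l k).1 < m := by
    intro k m hk; unfold sub; split_ifs <;> (try simp only []) <;> omega
  refine ⟨?_, h.x0, ?_, ?_, ?_⟩
  · intro k hk
    have := h.ord k (Finset.mem_of_mem_erase hk)
    exact ⟨hsub _ _ this.1, hsub _ _ this.2⟩
  · intro i hi hm; exact h.disj i hi (Finset.mem_of_mem_erase hm)
  · rintro v ⟨v0, vs, vt⟩
    have vk : lv v k = true := by
      have := vt t (Finset.mem_insert_self _ _)
      simpa [PND.mv] using this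
    rw [← par_upd_not (v := v) (β := lv v l) hgX]
    apply h.snd
    refine ⟨by rw [Function.update_of_ne g0.symm]; exact v0, ?_, ?_⟩
    · intro k hk
      rcases eq_or_ne k g with rfl | hkg
      · rw [Function.update_self, lv_upd_ne (h.ord k hk).1.ne, lv_upd_ne (h.ord k hk).2.ne]
        exact hv v vk
      · rw [Function.update_of_ne hkg, lv_upd, lv_upd]
        exact vs k (Finset.mem_erase.2 ⟨hkg, hk⟩)
    · intro s hs
      have hst : s ≠ t := fun e => ht (e ▸ hs)
      have := vt s (Finset.mem_insert_of_mem hs)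
      simp only [PND.mv, Function.update_of_ne hst] at this
      rw [lv_upd]; exact this
  · intro x hx
    obtain ⟨v, hok, hvx⟩ := h.cpl x hx
    have vk := hk v hok
    obtain ⟨v0, vs, vt⟩ := hok
    have e : lv v l = v g := by rw [hv v vk, vs g hg]
    refine ⟨v, ⟨v0, ?_, ?_⟩, hvx⟩
    · intro k hk
      show _ = (lv v (sub g l _) && lv v (sub g l _))
      rw [lv_sub_eq e, lv_sub_eq e]; exact vs k (Finset.mem_of_mem_erase hk)
    · intro s hs
      rcases eq_or_ne s t with rfl | hst
      · simpa [PND.mv] using vk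
      · simp only [PND.mv, Function.update_of_ne hst]
        show lv v (sub g l _) = _
        rw [lv_sub_eq e]; exact vt s (Finset.mem_of_mem_insert_of_ne hs hst)

lemma sub_zero {n : ℕ} {l k : Lit} (hn : n ≠ 0) (h : k.1 = 0) : sub n l k = k := by
  unfold sub; rw [if_neg]; omega

lemma sub_hit {n : ℕ} {l k : Lit} (hl : l.1 = 0) (h : k.1 = n) : (sub n l k).1 = 0 := by
  unfold sub; rw [if_pos h]; exact hl

lemma tch_sb_zero {P : Sys} {n k : ℕ} {l : Lit} (hn : n ≠ 0) (h : tch P k 0) :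
    tch (sb P n l) k 0 := by
  rcases h with h | h
  · left; show (sub n l _).1 = 0; rw [sub_zero hn h]; exact h
  · right; show (sub n l _).1 = 0; rw [sub_zero hn h]; exact h

lemma tch_sb_hit {P : Sys} {n k : ℕ} {l : Lit} (hl : l.1 = 0) (h : tch P k n) :
    tch (sb P n l) k 0 := by
  rcases h with h | h
  · left; exact sub_hit hl h
  · right; exact sub_hit hl h

lemma tch_sb_other {P : Sys} {n k m : ℕ} {l : Lit} (hm : m ≠ n) (h : tch P k m) :
    tch (sb P n l) k m := by
  unfold tch PND.sb sub
  rcases h with h | h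
  · left; simp only [h, if_neg hm]
  · right; simp only [h, if_neg hm]

/-- a gate touching the constant is a literal -/
lemma lit_of_tch {P : Sys} {g : ℕ} (hg : (P.a g).1 < g ∧ (P.b g).1 < g) (h : tch P g 0) :
    ∃ l : Lit, l.1 < g ∧
      ∀ v : ℕ → Bool, v 0 = false → lv v l = (lv v (P.a g) && lv v (P.b g)) := by
  rcases h with h | h
  · cases hs : (P.a g).2
    · exact ⟨(0, false), by simp; omega, fun v v0 => by simp [lv, v0, h, hs]⟩
    · exact ⟨P.b g, hg.2, fun v v0 => by simp [lv, v0, h, hs]⟩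
  · cases hs : (P.b g).2
    · exact ⟨(0, false), by simp; omega, fun v v0 => by simp [lv, v0, h, hs]⟩
    · exact ⟨P.a g, hg.1, fun v v0 => by simp [lv, v0, h, hs]⟩

lemma lit_of_tch2 {P : Sys} {g : ℕ} (ha : (P.a g).1 = 0) (hb : (P.b g).1 = 0) :
    ∃ l : Lit, l.1 = 0 ∧
      ∀ v : ℕ → Bool, v 0 = false → lv v l = (lv v (P.a g) && lv v (P.b g)) :=
  ⟨(0, (P.a g).2 && (P.b g).2), rfl, fun v v0 => by simp [lv, v0, ha, hb]⟩

/-- removing one cost unit: a gate or an output touching 0 -/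
lemma Good.last {P X c} (h : Good P X c) (hX : X.Nonempty)
    (hh : (∃ g ∈ P.S, tch P g 0) ∨ ∃ t ∈ P.T, (P.o t).1 = 0) :
    ∃ Q, Good Q X c ∧ Q.S.card + Q.T.card + 1 = P.S.card + P.T.card ∧ Q.S.card ≤ P.S.card := by
  rcases hh with ⟨g, hg, ht⟩ | ⟨t, ht, h0⟩
  · obtain ⟨l, hl, hv⟩ := lit_of_tch (h.ord g hg) ht
    refine ⟨_, h.sb hg hl hv, ?_, ?_⟩
    · have := Finset.card_erase_add_one hg
      simp only [PND.sb]; omega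
    · exact Finset.card_erase_le
  · refine ⟨_, h.dropOut hX ht h0, ?_, le_rfl⟩
    have := Finset.card_erase_add_one ht
    simp only; omega

/-- Two gates read input `i`: three units can be removed. -/
lemma Good.three {P X c} (h : Good P X c) (hX : 2 ≤ X.card) {i : ℕ} (hi : i ∈ X)
    {g k : ℕ} (hg : g ∈ P.S) (hk : k ∈ P.S) (hgk : g < k) (tg : tch P g i) (tk : tch P k i)
    (ug : (∃ m ∈ P.S, tch P m g) ∨ ∃ t ∈ P.T, (P.o t).1 = g)
    (uk : (∃ m ∈ P.S, tch P m k) ∨ ∃ t ∈ P.T, (P.o t).1 = k) :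
    ∃ Q c', Good Q (X.erase i) c' ∧ Q.S.card + Q.T.card + 3 = P.S.card + P.T.card ∧
      Q.S.card ≤ P.S.card := by
  have i0 : i ≠ 0 := fun e => h.x0 (e ▸ hi)
  have iS := h.disj i hi
  have g0 : g ≠ 0 := by have := h.ord g hg; omega
  have k0 : k ≠ 0 := by omega
  have gi : g ≠ i := fun e => iS (e ▸ hg)
  have ki : k ≠ i := fun e => iS (e ▸ hk)
  have hne : (X.erase i).Nonempty := by
    rw [← Finset.card_pos, Finset.card_erase_of_mem hi]; omega
  obtain ⟨β, hβ⟩ : ∃ β : Bool, ∀ v : ℕ → Bool, v 0 = false → lv v (0, false) =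
      (lv v ((PND.sb P i (0, β)).a g) && lv v ((PND.sb P i (0, β)).b g)) := by
    rcases tg with t | t
    · exact ⟨(P.a g).2, fun v v0 => by simp [PND.sb, sub, t, lv, v0]⟩
    · exact ⟨(P.b g).2, fun v v0 => by simp [PND.sb, sub, t, lv, v0]⟩
  have h1 := h.fix hi β
  set P1 := PND.sb P i (0, β) with hP1
  have hS1 : P1.S = P.S := Finset.erase_eq_of_notMem iS
  have h2 := h1.sb (hS1 ▸ hg) (l := (0, false)) (by simp; omega) hβ
  set P2 := PND.sb P1 g (0, false) with hP2
  have hS2 : P2.S = P.S.erase g := by rw [← hS1]; rfl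
  have hk2 : k ∈ P2.S := by rw [hS2]; exact Finset.mem_erase.2 ⟨hgk.ne', hk⟩
  have tk2 : tch P2 k 0 := tch_sb_zero g0 (tch_sb_hit rfl tk)
  -- it is enough to find a suitable literal for k
  have key : ∀ l : Lit, l.1 < k →
      (∀ v : ℕ → Bool, v 0 = false → lv v l = (lv v (P2.a k) && lv v (P2.b k))) →
      ((∃ m ∈ P.S, m ≠ g ∧ m ≠ k ∧ tch (PND.sb P2 k l) m 0) ∨
        ∃ t ∈ P.T, ((PND.sb P2 k l).o t).1 = 0) →
      ∃ Q c', Good Q (X.erase i) c' ∧ Q.S.card + Q.T.card + 3 = P.S.card + P.T.card ∧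
        Q.S.card ≤ P.S.card := by
    intro l hl hv hh
    have h3 := h2.sb hk2 hl hv
    have hS3 : (PND.sb P2 k l).S = (P.S.erase g).erase k := by rw [← hS2]; rfl
    have hT3 : (PND.sb P2 k l).T = P.T := rfl
    obtain ⟨Q, hQ, e1, e2⟩ := h3.last hne (by
      rcases hh with ⟨m, hm, mg, mk, tm⟩ | ⟨t, ht, h0⟩
      · left
        exact ⟨m, by rw [hS3]; exact Finset.mem_erase.2 ⟨mk, Finset.mem_erase.2 ⟨mg, hm⟩⟩, tm⟩
      · right; exact ⟨t, ht, h0⟩)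
    refine ⟨Q, _, hQ, ?_, ?_⟩
    all_goals
      have c1 := Finset.card_erase_add_one hg
      have c2 := Finset.card_erase_add_one (Finset.mem_erase.2 ⟨hgk.ne', hk⟩ : k ∈ P.S.erase g)
      rw [hS3] at e1 e2
      rw [hT3] at e1
      omega
  by_cases hsp : tch P k g
  · -- k reads both i and g
    have hab : (P2.a k).1 = 0 ∧ (P2.b k).1 = 0 := by
      simp only [hP2, hP1, PND.sb, sub]
      rcases tk with t | t <;> rcases hsp with s | s
      · exact absurd (s.symm.trans t) gi
      · simp [t, s, gi, g0.symm]
      · simp [t, s, gi, g0.symm]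
      · exact absurd (s.symm.trans t) gi
    obtain ⟨l, hl, hv⟩ := lit_of_tch2 hab.1 hab.2
    refine key l (by omega) hv ?_
    rcases uk with ⟨m, hm, tm⟩ | ⟨t, ht, e⟩
    · left
      have hmk : k < m := by
        have := h.ord m hm
        rcases tm with t | t <;> omega
      exact ⟨m, hm, by omega, by omega,
        tch_sb_hit hl (tch_sb_other hgk.ne' (tch_sb_other ki tm))⟩
    · right
      refine ⟨t, ht, ?_⟩
      simp only [hP2, hP1, PND.sb, sub]
      simp [e, ki, hgk.ne', hl]
  · obtain ⟨l, hl, hv⟩ := lit_of_tch (h2.ord k hk2) tk2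
    refine key l hl hv ?_
    rcases ug with ⟨m, hm, tm⟩ | ⟨t, ht, e⟩
    · left
      have hmk : g < m := by
        have := h.ord m hm
        rcases tm with t | t <;> omega
      exact ⟨m, hm, by omega, fun e => hsp (e ▸ tm),
        tch_sb_zero k0 (tch_sb_hit rfl (tch_sb_other gi tm))⟩
    · right
      refine ⟨t, ht, ?_⟩
      simp only [hP2, hP1, PND.sb, sub]
      simp [e, gi, k0.symm]

theorem main (N : ℕ) : ∀ (P : Sys) (X : Finset ℕ) (c : ZMod 2), Good P X c → 1 ≤ X.card →
    2 * P.S.card + P.T.card = N → 3 * X.card ≤ P.S.card + P.T.card + 2 := by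
  induction N using Nat.strong_induction_on with
  | _ N ih =>
  intro P X c h hX hN
  rcases eq_or_lt_of_le hX with hX1 | hX2
  · by_contra hlt
    have hS : P.S = ∅ := by rw [← Finset.card_eq_zero]; omega
    have hT : P.T = ∅ := by rw [← Finset.card_eq_zero]; omega
    obtain ⟨j, hj, β, hβ⟩ := exists_par (Finset.card_pos.1 hX) (fun _ => false) (c + 1)
    have := h.snd (Function.update (fun _ => false) j β) ⟨by
      exact Function.update_of_ne (fun e : 0 = j => h.x0 (e ▸ hj)) _ _, by simp [hS], by simp [hT]⟩
    rw [hβ] at this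
    revert this; generalize c = c; revert c; decide
  have hX2 : 2 ≤ X.card := hX2
  obtain ⟨i, hi⟩ := Finset.card_pos.1 hX
  have iS := h.disj i hi
  -- outputs do not read inputs
  have hout : ∀ t ∈ P.T, (P.o t).1 ≠ i := by
    intro t ht e
    obtain ⟨v, ⟨-, -, vt⟩, hv⟩ := h.exists_val hX2 hi (P.o t).2
    have := vt t ht
    simp [lv, e, hv] at this
  -- unused gates
  by_cases hun : ∃ g ∈ P.S, (∀ k ∈ P.S, ¬ tch P k g) ∧ ∀ t ∈ P.T, (P.o t).1 ≠ g
  · obtain ⟨g, hg, h1, h2⟩ := hun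
    have := Finset.card_erase_add_one hg
    have := ih _ (by simp only; omega) _ X c (h.drop hg h1 h2) hX rfl
    simp only at this; omega
  have used : ∀ g ∈ P.S, (∃ m ∈ P.S, tch P m g) ∨ ∃ t ∈ P.T, (P.o t).1 = g := by
    intro g hg
    by_contra hc
    push Not at hc
    exact hun ⟨g, hg, hc.1, hc.2⟩
  have three : ∀ g k, g ∈ P.S → k ∈ P.S → g < k → tch P g i → tch P k i →
      3 * X.card ≤ P.S.card + P.T.card + 2 := by
    intro g k hg hk hgk tg tk
    obtain ⟨Q, c', hQ, e1, e2⟩ := h.three hX2 hi hg hk hgk tg tk (used g hg) (used k hk)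
    have ce := Finset.card_erase_of_mem hi
    have := ih _ (by omega) Q _ c' hQ (by omega) rfl
    omega
  -- some gate reads i
  obtain ⟨g, hg, tg⟩ : ∃ g ∈ P.S, tch P g i := by
    by_contra hc
    push Not at hc
    obtain ⟨v, hv, -⟩ := h.exists_val hX2 hi true
    exact h.flip hi hv hout (fun g hg t => absurd t (hc g hg))
  by_cases hk : ∃ k ∈ P.S, k ≠ g ∧ tch P k i
  · obtain ⟨k, hk, hkg, tk⟩ := hk
    rcases lt_or_gt_of_ne hkg with hlt | hlt
    · exact three k g hk hg hlt tk tg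
    · exact three g k hg hk hlt tg tk
  push Not at hk
  have cg := Finset.card_erase_add_one hg
  -- both inputs are i
  by_cases hb : (P.a g).1 = i ∧ (P.b g).1 = i
  · obtain ⟨l, hl, hv⟩ : ∃ l : Lit, l.1 < g ∧
        ∀ v : ℕ → Bool, v 0 = false → lv v l = (lv v (P.a g) && lv v (P.b g)) := by
      have := h.ord g hg
      by_cases e : (P.a g).2 = (P.b g).2
      · exact ⟨P.a g, this.1, fun v v0 => by simp [lv, hb.1, hb.2, e]⟩
      · refine ⟨(0, false), by simp; omega, fun v v0 => ?_⟩
        simp only [lv, hb.1, hb.2, v0]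
        revert e
        generalize (P.a g).2 = p
        generalize (P.b g).2 = q
        generalize v i = r
        revert p q r; decide
    have := ih _ (by simp only [PND.sb]; omega) _ X c (h.sb hg hl hv) hX rfl
    simp only [PND.sb] at this; omega
  have hmv : ∀ l k : Lit, ((P.a g = l ∧ P.b g = k) ∨ (P.a g = k ∧ P.b g = l)) → k.1 ≠ i →
      3 * X.card ≤ P.S.card + P.T.card + 2 := by
    intro l k hlk hki
    obtain ⟨t, ht⟩ := Infinite.exists_notMem_finset P.T
    have := h.mv hg hlk ht (by
      intro v hv
      by_contra hf
      simp only [Bool.not_eq_true] at hf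
      refine h.flip hi hv hout (fun m hm tm => ?_)
      have hmg : m = g := by by_contra hne; exact hk m hm hne tm
      subst hmg
      rcases hlk with ⟨p, q⟩ | ⟨p, q⟩
      · right; rw [q]; exact ⟨hki, hf⟩
      · left; rw [p]; exact ⟨hki, hf⟩)
    have cT := Finset.card_insert_of_notMem ht
    have := ih _ (by simp only [PND.mv, PND.sb]; omega) _ X c this hX rfl
    simp only [PND.mv, PND.sb] at this; omega
  rcases tg with t | t
  · exact hmv _ _ (Or.inl ⟨rfl, rfl⟩) (fun e => hb ⟨t, e⟩)
  · exact hmv _ _ (Or.inr ⟨rfl, rfl⟩) (fun e => hb ⟨e, t⟩)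

lemma u2_form : ∀ f : Bool → Bool → Bool, IsU2 f → ∃ q : Bool × Bool × Bool × Bool × Bool,
    ∀ a b, f a b = xor q.1 ((xor (q.2.1 && a) q.2.2.1) && (xor (q.2.2.2.1 && b) q.2.2.2.2)) := by
  unfold IsU2
  decide

end PND

namespace PND

/-- wire of a circuit to literal -/
def encL {n m s : ℕ} (r : ℕ → Bool) : ((Fin n ⊕ Fin m) ⊕ Bool) ⊕ Fin s → Lit
  | .inl (.inl (.inl i)) => (1 + i.val, false)
  | .inl (.inl (.inr j)) => (1 + n + j.val, false)
  | .inl (.inr b) => (0, b)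
  | .inr h => (1 + n + m + h.val, r h.val)

/-- value of a wire of a circuit -/
def wv {n m s : ℕ} (z : Fin n ⊕ Fin m → Bool) (nv : ℕ → Bool) :
    ((Fin n ⊕ Fin m) ⊕ Bool) ⊕ Fin s → Bool
  | .inl (.inl i) => z i
  | .inl (.inr b) => b
  | .inr h => nv h.val

/-- total version of node values -/
def nvt {n m : ℕ} (C : Circuit (Fin n ⊕ Fin m)) (z : Fin n ⊕ Fin m → Bool) (k : ℕ) : Bool :=
  if h : k < C.size then C.nodeVal z ⟨k, h⟩ else false

lemma nvt_eq {n m : ℕ} (C : Circuit (Fin n ⊕ Fin m)) (z : Fin n ⊕ Fin m → Bool) (g : Fin C.size) :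
    nvt C z g.val = C.gate g (wv z (nvt C z) (C.in1 g)) (wv z (nvt C z) (C.in2 g)) := by
  have e : nvt C z g.val = C.nodeVal z g := by rw [nvt, dif_pos g.isLt]
  rw [e, Circuit.nodeVal]
  congr 1
  · rcases C.in1 g with (i | b) | h
    · rfl
    · rfl
    · simp [wv, nvt, h.isLt.trans g.isLt]
  · rcases C.in2 g with (i | b) | h
    · rfl
    · rfl
    · simp [wv, nvt, h.isLt.trans g.isLt]

lemma eval_eq {n m : ℕ} (C : Circuit (Fin n ⊕ Fin m)) (z : Fin n ⊕ Fin m → Bool) :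
    C.eval z = wv z (nvt C z) C.out := by
  unfold Circuit.eval
  rcases C.out with (i | b) | h
  · rfl
  · rfl
  · simp [wv, nvt]

lemma encL_lt {n m s : ℕ} (r : ℕ → Bool) (w : ((Fin n ⊕ Fin m) ⊕ Bool) ⊕ Fin s) :
    (encL r w).1 < 1 + n + m + s := by
  rcases w with ((i | j) | b) | h <;> simp only [encL] <;> omega

lemma lv_encL {n m s : ℕ} {r : ℕ → Bool} {v : ℕ → Bool} {z : Fin n ⊕ Fin m → Bool}
    {nv : ℕ → Bool} (v0 : v 0 = false) (h1 : ∀ i : Fin n, v (1 + i.val) = z (.inl i))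
    (h2 : ∀ j : Fin m, v (1 + n + j.val) = z (.inr j))
    (h3 : ∀ k < s, v (1 + n + m + k) = xor (r k) (nv k))
    (w : ((Fin n ⊕ Fin m) ⊕ Bool) ⊕ Fin s) : lv v (encL r w) = wv z nv w := by
  rcases w with ((i | j) | b) | h
  · simp [encL, lv, wv, h1]
  · simp [encL, lv, wv, h2]
  · simp [encL, lv, wv, v0]
  · simp only [encL, lv, wv, h3 _ h.isLt]
    cases r h.val <;> simp

/-- modify a literal -/
def md (k s : Bool) (l : Lit) : Lit := if k then (l.1, xor l.2 s) else (0, s)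

lemma lv_md {v : ℕ → Bool} (v0 : v 0 = false) (k s : Bool) (l : Lit) :
    lv v (md k s l) = xor (k && lv v l) s := by
  cases k <;> simp [md, lv, v0]

lemma md_lt {k s : Bool} {l : Lit} {N : ℕ} (h : l.1 < N) : (md k s l).1 < N := by
  cases k <;> simp [md] <;> omega

lemma par_eq {n : ℕ} (v : ℕ → Bool) (x : Fin n → Bool) (h : ∀ i : Fin n, v (1 + i.val) = x i) :
    par (Finset.Ico 1 (1 + n)) v = 1 ↔ parity n x = true := by
  have e : par (Finset.Ico 1 (1 + n)) v = ((∑ i, (x i).toNat : ℕ) : ZMod 2) := by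
    unfold par
    rw [Finset.sum_Ico_eq_sum_range, Nat.add_sub_cancel_left, Finset.sum_range]
    push_cast
    exact Finset.sum_congr rfl (fun i _ => by rw [h i])
  rw [e, parity, decide_eq_true_iff]
  have := ZMod.natCast_eq_natCast_iff' (∑ i, (x i).toNat) 1 2
  simpa using this

theorem bound (n : ℕ) (hn : 2 ≤ n) (m : ℕ)
    (C : Circuit (Fin n ⊕ Fin m)) (hU2 : C.IsU2Circuit)
    (hC : C.ComputesND (parity n)) :
    3 * (n - 1) ≤ C.size := by
  choose q hq using fun g => u2_form _ (hU2 g)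
  let r : ℕ → Bool := fun k => if h : k < C.size then (q ⟨k, h⟩).1 else false
  let P : Sys :=
    { S := Finset.Ico (1 + n + m) (1 + n + m + C.size)
      T := {0}
      a := fun k => if h : k - (1 + n + m) < C.size then
        md (q ⟨_, h⟩).2.1 (q ⟨_, h⟩).2.2.1 (encL r (C.in1 ⟨_, h⟩)) else (0, false)
      b := fun k => if h : k - (1 + n + m) < C.size then
        md (q ⟨_, h⟩).2.2.2.1 (q ⟨_, h⟩).2.2.2.2 (encL r (C.in2 ⟨_, h⟩)) else (0, false)
      o := fun _ => encL r C.out }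
  have pa : ∀ g : Fin C.size, P.a (1 + n + m + g.val) =
      md (q g).2.1 (q g).2.2.1 (encL r (C.in1 g)) := by
    intro g
    have e : 1 + n + m + g.val - (1 + n + m) = g.val := by omega
    simp only [P]
    generalize 1 + n + m + g.val - (1 + n + m) = k at e
    subst e
    simp
  have pb : ∀ g : Fin C.size, P.b (1 + n + m + g.val) =
      md (q g).2.2.2.1 (q g).2.2.2.2 (encL r (C.in2 g)) := by
    intro g
    have e : 1 + n + m + g.val - (1 + n + m) = g.val := by omega
    simp only [P]
    generalize 1 + n + m + g.val - (1 + n + m) = k at e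
    subst e
    simp
  have hr : ∀ g : Fin C.size, r g.val = (q g).1 := by intro g; simp [r]
  have allS : ∀ p : ℕ → Prop, (∀ k ∈ P.S, p k) ↔ ∀ g : Fin C.size, p (1 + n + m + g.val) := by
    intro p
    constructor
    · intro h g; apply h; simp only [P, Finset.mem_Ico]; omega
    · intro h k hk
      simp only [P, Finset.mem_Ico] at hk
      have := h ⟨k - (1 + n + m), by omega⟩
      simp only at this
      rwa [Nat.add_sub_cancel' hk.1] at this
  have gate_val : ∀ (g : Fin C.size) (v : ℕ → Bool) (z : Fin n ⊕ Fin m → Bool), v 0 = false →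
      (∀ i : Fin n, v (1 + i.val) = z (.inl i)) →
      (∀ j : Fin m, v (1 + n + j.val) = z (.inr j)) →
      (∀ k < g.val, v (1 + n + m + k) = xor (r k) (nvt C z k)) →
      (lv v (P.a (1 + n + m + g.val)) && lv v (P.b (1 + n + m + g.val))) =
        xor (r g.val) (nvt C z g.val) := by
    intro g v z v0 h1 h2 h3
    rw [pa, pb, lv_md v0, lv_md v0, lv_encL v0 h1 h2 h3, lv_encL v0 h1 h2 h3, nvt_eq, hq, hr]
    rw [← Bool.xor_assoc, Bool.xor_self, Bool.false_xor]
  have G : Good P (Finset.Ico 1 (1 + n)) 1 := by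
    refine ⟨?_, by simp, ?_, ?_, ?_⟩
    · rw [allS]
      intro g
      rw [pa, pb]
      exact ⟨md_lt (encL_lt _ _), md_lt (encL_lt _ _)⟩
    · intro i hi
      simp only [P, Finset.mem_Ico] at hi ⊢; omega
    · rintro v ⟨v0, vs, vt⟩
      rw [allS] at vs
      let x : Fin n → Bool := fun i => v (1 + i.val)
      let y : Fin m → Bool := fun i => v (1 + n + i.val)
      rw [par_eq v x (fun _ => rfl), hC]
      refine ⟨y, ?_⟩
      have h3 : ∀ k < C.size, v (1 + n + m + k) = xor (r k) (nvt C (Sum.elim x y) k) := by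
        intro k
        induction k using Nat.strong_induction_on with
        | _ k ih =>
        intro hk
        have := vs ⟨k, hk⟩
        rw [this]
        exact gate_val ⟨k, hk⟩ v _ v0 (fun _ => rfl) (fun _ => rfl)
          (fun j hj => ih j hj (lt_trans hj hk))
      rw [eval_eq, ← lv_encL (r := r) v0 (fun _ => rfl) (fun _ => rfl) h3]
      exact vt 0 (by simp [P])
    · intro x' hx'
      let x : Fin n → Bool := fun i => x' (1 + i.val)
      rw [par_eq x' x (fun _ => rfl), hC] at hx'
      obtain ⟨y, hy⟩ := hx'
      let v : ℕ → Bool := fun k => if k = 0 then false else if k < 1 + n then x' k else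
        if h : k - (1 + n) < m then y ⟨k - (1 + n), h⟩ else
          xor (r (k - (1 + n + m))) (nvt C (Sum.elim x y) (k - (1 + n + m)))
      have v0 : v 0 = false := rfl
      have h1 : ∀ i : Fin n, v (1 + i.val) = Sum.elim x y (.inl i) := by
        intro i
        simp [v, x]
      have h2 : ∀ j : Fin m, v (1 + n + j.val) = Sum.elim x y (.inr j) := by
        intro j
        have e1 : ¬ (1 + n + j.val = 0) := by omega
        have e2 : ¬ (1 + n + j.val < 1 + n) := by omega
        simp [v, e1, e2]
      have h3 : ∀ k, v (1 + n + m + k) = xor (r k) (nvt C (Sum.elim x y) k) := by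
        intro k
        have e1 : ¬ (1 + n + m + k = 0) := by omega
        have e2 : ¬ (1 + n + m + k < 1 + n) := by omega
        have e3 : ¬ (1 + n + m + k - (1 + n) < m) := by omega
        have e4 : 1 + n + m + k - (1 + n + m) = k := by omega
        simp only [v, if_neg e1, if_neg e2, dif_neg e3, e4]
      refine ⟨v, ⟨v0, ?_, ?_⟩, ?_⟩
      · rw [allS]
        intro g
        rw [gate_val g v _ v0 h1 h2 (fun k _ => h3 k), h3]
      · intro t _
        show lv v (encL r C.out) = true
        rw [lv_encL v0 h1 h2 (fun k _ => h3 k), ← eval_eq, hy]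
      · intro i hi
        rw [Finset.mem_Ico] at hi
        have e1 : ¬ (i = 0) := by omega
        simp only [v, if_neg e1, if_pos hi.2]
  have := main _ P _ 1 G (by simp; omega) rfl
  simp [P] at this
  omega

end PND

/-- For every `n ≥ 2`, every nondeterministic `U₂`-circuit
computing `Parity_n` (with any number `m` of guess inputs) has at least
`3(n-1)` gates. -/
theorem parity_ndU2_lower_bound (n : ℕ) (hn : 2 ≤ n) (m : ℕ)
    (C : Circuit (Fin n ⊕ Fin m)) (hU2 : C.IsU2Circuit)
    (hC : C.ComputesND (parity n)) :
    3 * (n - 1) ≤ C.size := by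
  exact PND.bound n hn m C hU2 hC
end

section
/- For all constants c, d > 0 and every constant ε > 0, there exists a constant K such that the following holds: every B_2-circuit with n inputs (n ≥ 4), size at most c·n, and depth at most d·log₂ n computing a Boolean function f : {0,1}^n → {0,1} can be converted to a nondeterministic formula with n actual inputs, at most K·n / log₂ log₂ n guess inputs, and size at most K·n^{1+ε}, computing f. -/
namespace Circuit

/-- The depth of (the output wire of) gate `g`: `1` plus the maximum depth of
its two incoming wires, where wires from input nodes have depth `0`. -/
def nodeDepth {ι : Type} (C : Circuit ι) : (g : Fin C.size) → ℕ
  | g =>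
    1 + max
      (match C.in1 g with
       | .inl _ => 0
       | .inr h => C.nodeDepth ⟨h.val, h.isLt.trans g.isLt⟩)
      (match C.in2 g with
       | .inl _ => 0
       | .inr h => C.nodeDepth ⟨h.val, h.isLt.trans g.isLt⟩)
  termination_by g => g.val
  decreasing_by all_goals exact h.isLt

/-- The depth of a circuit: the length of the longest path from an input to
the output. -/
def depth {ι : Type} (C : Circuit ι) : ℕ :=
  match C.out with
  | .inl _ => 0
  | .inr g => C.nodeDepth g

end Circuit

/-- A Boolean formula over input index type `ι`: a circuit in which every gate
has fan-out `1`, i.e., a tree whose leaves are variables or constants and whose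
internal nodes are fan-in-2 gates. -/
inductive Formula (ι : Type) : Type where
  | var : ι → Formula ι
  | const : Bool → Formula ι
  | gate : (Bool → Bool → Bool) → Formula ι → Formula ι → Formula ι

/-- The size of a formula: its number of gates. -/
def Formula.size {ι : Type} : Formula ι → ℕ
  | .var _ => 0
  | .const _ => 0
  | .gate _ p q => p.size + q.size + 1

/-- Evaluation of a formula. -/
def Formula.eval {ι : Type} (x : ι → Bool) : Formula ι → Bool
  | .var i => x i
  | .const b => b
  | .gate f p q => f (p.eval x) (q.eval x)

namespace CNF

variable {ι : Type} {m : ℕ}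

/-- The incoming wire of a gate. -/
def inp (C : Circuit ι) (g : Fin C.size) (b : Bool) : (ι ⊕ Bool) ⊕ Fin g.val :=
  if b then C.in1 g else C.in2 g

/-- Value of a wire. -/
def wv (C : Circuit ι) (x : ι → Bool) (g : Fin C.size) (b : Bool) : Bool :=
  match inp C g b with
  | .inl (.inl i) => x i
  | .inl (.inr b) => b
  | .inr h => C.nodeVal x ⟨h.val, h.isLt.trans g.isLt⟩

theorem nodeVal_eq (C : Circuit ι) (x : ι → Bool) (g : Fin C.size) :
    C.nodeVal x g = C.gate g (wv C x g true) (wv C x g false) := by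
  rw [Circuit.nodeVal]; rfl

/-- Formula unrolling of a gate, with some wires replaced by guesses. -/
def nf (C : Circuit ι) (gs : Fin C.size → Bool → Option (Fin m)) :
    (g : Fin C.size) → Formula (ι ⊕ Fin m)
  | g =>
    .gate (C.gate g)
      (match gs g true with
       | some e => .var (.inr e)
       | none => match inp C g true with
         | .inl (.inl i) => .var (.inl i)
         | .inl (.inr b) => .const b
         | .inr h => nf C gs ⟨h.val, h.isLt.trans g.isLt⟩)
      (match gs g false with
       | some e => .var (.inr e)
       | none => match inp C g false with
         | .inl (.inl i) => .var (.inl i)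
         | .inl (.inr b) => .const b
         | .inr h => nf C gs ⟨h.val, h.isLt.trans g.isLt⟩)
  termination_by g => g.val
  decreasing_by all_goals exact h.isLt

/-- Formula of the source of a wire. -/
def src (C : Circuit ι) (gs : Fin C.size → Bool → Option (Fin m)) (g : Fin C.size) (b : Bool) :
    Formula (ι ⊕ Fin m) :=
  match inp C g b with
  | .inl (.inl i) => .var (.inl i)
  | .inl (.inr b) => .const b
  | .inr h => nf C gs ⟨h.val, h.isLt.trans g.isLt⟩

/-- Formula of a wire, possibly a guess. -/
def wf (C : Circuit ι) (gs : Fin C.size → Bool → Option (Fin m)) (g : Fin C.size) (b : Bool) :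
    Formula (ι ⊕ Fin m) :=
  match gs g b with
  | some e => .var (.inr e)
  | none => src C gs g b

theorem nf_eq (C : Circuit ι) (gs : Fin C.size → Bool → Option (Fin m)) (g : Fin C.size) :
    nf C gs g = .gate (C.gate g) (wf C gs g true) (wf C gs g false) := by
  rw [nf]; rfl

theorem nf_eval (C : Circuit ι) (gs : Fin C.size → Bool → Option (Fin m))
    (x : ι → Bool) (y : Fin m → Bool)
    (H : ∀ g b e, gs g b = some e →
      (y e = (src C gs g b).eval (Sum.elim x y) ∨ y e = wv C x g b)) :
    ∀ (k : ℕ) (g : Fin C.size), g.val = k →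
      (nf C gs g).eval (Sum.elim x y) = C.nodeVal x g := by
  intro k
  induction k using Nat.strong_induction_on with
  | _ k ih =>
    intro g hg
    have hs : ∀ b, (src C gs g b).eval (Sum.elim x y) = wv C x g b := by
      intro b
      unfold src wv
      split
      · simp [Formula.eval]
      · simp [Formula.eval]
      · rename_i h _
        exact ih h.val (hg ▸ h.isLt) _ rfl
    have hw : ∀ b, (wf C gs g b).eval (Sum.elim x y) = wv C x g b := by
      intro b
      unfold wf
      split
      · rename_i e he
        rcases H g b e he with h | h
        · simp only [Formula.eval, Sum.elim_inr]; rw [h, hs]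
        · simpa [Formula.eval] using h
      · exact hs b
    rw [nf_eq, nodeVal_eq]
    simp only [Formula.eval, hw]

theorem src_eval (C : Circuit ι) (gs : Fin C.size → Bool → Option (Fin m))
    (x : ι → Bool) (y : Fin m → Bool)
    (H : ∀ g b e, gs g b = some e →
      (y e = (src C gs g b).eval (Sum.elim x y) ∨ y e = wv C x g b))
    (g : Fin C.size) (b : Bool) : (src C gs g b).eval (Sum.elim x y) = wv C x g b := by
  unfold src wv
  split
  · simp [Formula.eval]
  · simp [Formula.eval]
  · exact nf_eval C gs x y H _ _ rfl

theorem depth_lt (C : Circuit ι) (g : Fin C.size) (b : Bool) (h : Fin g.val)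
    (hh : inp C g b = .inr h) :
    C.nodeDepth ⟨h.val, h.isLt.trans g.isLt⟩ < C.nodeDepth g := by
  rw [Circuit.nodeDepth.eq_def C g]
  cases b
  · have : C.in2 g = .inr h := by simpa [inp] using hh
    simp only [this]; omega
  · have : C.in1 g = .inr h := by simpa [inp] using hh
    simp only [this]; omega

/-- The cut wires. -/
def cut (C : Circuit ι) (a r k : ℕ) (g : Fin C.size) (b : Bool) : Prop :=
  ∃ h : Fin g.val, inp C g b = .inr h ∧ C.nodeDepth g < 2 ^ k ∧
    C.nodeDepth ⟨h.val, h.isLt.trans g.isLt⟩ / 2 ^ (a + r) = C.nodeDepth g / 2 ^ (a + r) ∧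
    C.nodeDepth ⟨h.val, h.isLt.trans g.isLt⟩ / 2 ^ a ≠ C.nodeDepth g / 2 ^ a

/-- The compressed label. -/
def lab (a r l : ℕ) : ℕ := (l / 2 ^ (a + r)) * 2 ^ a + l % 2 ^ a

theorem lab_lt (a r k l : ℕ) (hk : a + r ≤ k) (hl : l < 2 ^ k) : lab a r l + 1 ≤ 2 ^ (k - r) := by
  unfold lab
  obtain ⟨t, rfl⟩ := Nat.exists_eq_add_of_le hk
  have h1 : l / 2 ^ (a + r) < 2 ^ t := by
    rw [Nat.div_lt_iff_lt_mul (by positivity), ← pow_add]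
    rwa [add_comm t]
  have h2 : l % 2 ^ a < 2 ^ a := Nat.mod_lt _ (by positivity)
  have h3 : a + r + t - r = t + a := by omega
  rw [h3, pow_add 2 t a]
  generalize l / 2 ^ (a + r) = u at *
  have h4 : (u + 1) * 2 ^ a ≤ 2 ^ t * 2 ^ a := Nat.mul_le_mul_right _ h1
  rw [add_mul, one_mul] at h4
  omega

theorem lab_mono (a r x y : ℕ) (hxy : x < y)
    (hc : ¬ (x / 2 ^ (a + r) = y / 2 ^ (a + r) ∧ x / 2 ^ a ≠ y / 2 ^ a)) :
    lab a r x < lab a r y := by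
  unfold lab
  have h2 : x % 2 ^ a < 2 ^ a := Nat.mod_lt _ (by positivity)
  have hle : x / 2 ^ (a + r) ≤ y / 2 ^ (a + r) := Nat.div_le_div_right hxy.le
  rcases hle.lt_or_eq with h | h
  · have : x / 2 ^ (a + r) + 1 ≤ y / 2 ^ (a + r) := h
    have h4 := Nat.mul_le_mul_right (2 ^ a) this
    rw [add_mul, one_mul] at h4
    omega
  · have h3 : x / 2 ^ a = y / 2 ^ a := by
      by_contra h3
      exact hc ⟨h, h3⟩
    have hx := Nat.div_add_mod x (2 ^ a)
    have hy := Nat.div_add_mod y (2 ^ a)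
    rw [h3] at hx
    rw [h]
    omega

theorem nf_size (C : Circuit ι) (gs : Fin C.size → Bool → Option (Fin m)) (a r k : ℕ)
    (hgs : ∀ g b, gs g b = none → ¬ cut C a r k g b) :
    ∀ (j : ℕ) (g : Fin C.size), g.val = j → C.nodeDepth g < 2 ^ k →
      (nf C gs g).size + 1 ≤ 2 ^ (lab a r (C.nodeDepth g) + 1) := by
  intro j
  induction j using Nat.strong_induction_on with
  | _ j ih =>
    intro g hg hk
    have hw : ∀ b, (wf C gs g b).size + 1 ≤ 2 ^ (lab a r (C.nodeDepth g)) := by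
      intro b
      unfold wf
      split
      · simpa [Formula.size] using Nat.one_le_two_pow
      · rename_i hn
        have hnc := hgs g b hn
        unfold src
        split
        · simpa [Formula.size] using Nat.one_le_two_pow
        · simpa [Formula.size] using Nat.one_le_two_pow
        · rename_i h hh
          have hlt := depth_lt C g b h hh
          have := ih h.val (hg ▸ h.isLt) ⟨h.val, h.isLt.trans g.isLt⟩ rfl (hlt.trans hk)
          refine this.trans (Nat.pow_le_pow_right (by norm_num) ?_)
          apply lab_mono _ _ _ _ hlt
          intro hc
          exact hnc ⟨h, hh, hk, hc⟩
    rw [nf_eq]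
    simp only [Formula.size]
    have h1 := hw true
    have h2 := hw false
    rw [pow_succ]
    omega

/-- Conjunction of a list of formulas with a base formula. -/
def conj {κ : Type} (l : List (Formula κ)) (B : Formula κ) : Formula κ :=
  l.foldr (fun p q => .gate and p q) B

theorem conj_eval {κ : Type} (z : κ → Bool) (l : List (Formula κ)) (B : Formula κ) :
    (conj l B).eval z = true ↔ (∀ p ∈ l, p.eval z = true) ∧ B.eval z = true := by
  induction l with
  | nil => simp [conj]
  | cons p l ih =>
    have : conj (p :: l) B = .gate and p (conj l B) := rfl
    rw [this]
    simp only [Formula.eval, Bool.and_eq_true, ih, List.mem_cons, forall_eq_or_imp, and_assoc]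

theorem conj_size {κ : Type} (l : List (Formula κ)) (B : Formula κ) (M : ℕ)
    (h : ∀ p ∈ l, p.size + 1 ≤ M) : (conj l B).size ≤ l.length * M + B.size := by
  induction l with
  | nil => simp [conj]
  | cons p l ih =>
    have : conj (p :: l) B = .gate and p (conj l B) := rfl
    rw [this]
    have h1 := h p (by simp)
    have h2 := ih (fun q hq => h q (by simp [hq]))
    simp only [Formula.size, List.length_cons, add_mul]
    omega

open Classical in
/-- The number of cut wires. -/
noncomputable def cutSet (C : Circuit ι) (a r k : ℕ) : Finset (Fin C.size × Bool) :=
  Finset.univ.filter (fun e => cut C a r k e.1 e.2)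

theorem build (C : Circuit ι) (a r k : ℕ) (hk : a + r ≤ k) (hD : C.depth < 2 ^ k) :
    ∃ F : Formula (ι ⊕ Fin (cutSet C a r k).card),
      F.size ≤ (cutSet C a r k).card * (2 ^ 2 ^ (k - r) + 1) + 2 ^ 2 ^ (k - r) ∧
      ∀ x, C.eval x = true ↔ ∃ y, F.eval (Sum.elim x y) = true := by
  classical
  set m := (cutSet C a r k).card with hm
  let e : (cutSet C a r k) ≃ Fin m := (cutSet C a r k).equivFin
  let gs : Fin C.size → Bool → Option (Fin m) := fun g b =>
    if h : (g, b) ∈ cutSet C a r k then some (e ⟨(g, b), h⟩) else none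
  have hnone : ∀ g b, gs g b = none → ¬ cut C a r k g b := by
    intro g b h hc
    have : (g, b) ∈ cutSet C a r k := by simp [cutSet, hc]
    simp [gs, this] at h
  have hsome : ∀ g b j, gs g b = some j → (e.symm j).1 = (g, b) := by
    intro g b j h
    simp only [gs] at h
    split_ifs at h with h'
    simp only [Option.some.injEq] at h
    rw [← h]; simp
  have hgs : ∀ j, gs (e.symm j).1.1 (e.symm j).1.2 = some j := by
    intro j
    simp [gs]
  have hnf : ∀ g, C.nodeDepth g < 2 ^ k → (nf C gs g).size + 1 ≤ 2 ^ 2 ^ (k - r) := fun g hg =>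
    (nf_size C gs a r k hnone _ g rfl hg).trans
      (Nat.pow_le_pow_right (by norm_num) (lab_lt a r k _ hk hg))
  let B : Formula (ι ⊕ Fin m) := match C.out with
    | .inl (.inl i) => .var (.inl i)
    | .inl (.inr b) => .const b
    | .inr g => nf C gs g
  have hBs : B.size ≤ 2 ^ 2 ^ (k - r) := by
    simp only [B]
    unfold Circuit.depth at hD
    split
    · simp [Formula.size]
    · simp [Formula.size]
    · rename_i g hg
      rw [hg] at hD
      have := hnf g hD
      omega
  let chk : Fin m → Formula (ι ⊕ Fin m) := fun j =>
    .gate (fun a b => a == b) (.var (.inr j)) (src C gs (e.symm j).1.1 (e.symm j).1.2)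
  have hBe : ∀ x y, (∀ g b j, gs g b = some j →
      (y j = (src C gs g b).eval (Sum.elim x y) ∨ y j = wv C x g b)) →
      B.eval (Sum.elim x y) = C.eval x := by
    intro x y H
    simp only [B]
    unfold Circuit.eval
    split
    · simp [Formula.eval]
    · simp [Formula.eval]
    · exact nf_eval C gs x y H _ _ rfl
  refine ⟨conj ((List.finRange m).map chk) B, ?_, ?_⟩
  · have := conj_size ((List.finRange m).map chk) B (2 ^ 2 ^ (k - r) + 1) ?_
    · rw [List.length_map, List.length_finRange] at this
      omega
    · intro p hp
      obtain ⟨j, -, rfl⟩ := List.mem_map.1 hp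
      have hc : cut C a r k (e.symm j).1.1 (e.symm j).1.2 := by
        have := (e.symm j).2
        exact (Finset.mem_filter.1 this).2
      obtain ⟨h, hh, hlt, -⟩ := hc
      have hd := depth_lt C _ _ h hh
      have := hnf _ (hd.trans hlt)
      simp only [chk, Formula.size]
      unfold src
      rw [hh]
      simp only
      omega
  · intro x
    constructor
    · intro hx
      refine ⟨fun j => wv C x (e.symm j).1.1 (e.symm j).1.2, ?_⟩
      have H : ∀ g b j, gs g b = some j →
          (wv C x (e.symm j).1.1 (e.symm j).1.2 = (src C gs g b).eval
            (Sum.elim x fun j => wv C x (e.symm j).1.1 (e.symm j).1.2) ∨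
           wv C x (e.symm j).1.1 (e.symm j).1.2 = wv C x g b) := by
        intro g b j h
        right
        rw [hsome g b j h]
      rw [conj_eval]
      refine ⟨?_, ?_⟩
      · intro p hp
        obtain ⟨j, -, rfl⟩ := List.mem_map.1 hp
        simp only [chk, Formula.eval, Sum.elim_inr, beq_iff_eq]
        exact (src_eval C gs x (fun j => wv C x (e.symm j).1.1 (e.symm j).1.2) H _ _).symm
      · rw [hBe x _ H, hx]
    · rintro ⟨y, hy⟩
      rw [conj_eval] at hy
      rw [← hBe x y ?_]
      · exact hy.2
      · intro g b j h
        left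
        have := hy.1 (chk j) (List.mem_map.2 ⟨j, by simp, rfl⟩)
        simp only [chk, Formula.eval, Sum.elim_inr, beq_iff_eq] at this
        rw [hsome g b j h] at this
        exact this

theorem cut_disj (C : Circuit ι) (r k p q : ℕ) (hpq : p < q) (g : Fin C.size) (b : Bool)
    (h1 : cut C (p * r) r k g b) (h2 : cut C (q * r) r k g b) : False := by
  obtain ⟨h, hh, -, h3, -⟩ := h1
  obtain ⟨h', hh', -, -, h4⟩ := h2
  rw [hh] at hh'
  obtain rfl : h = h' := by simpa using hh'
  apply h4
  have : p * r + r ≤ q * r := by nlinarith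
  obtain ⟨t, ht⟩ := Nat.exists_eq_add_of_le this
  rw [ht, pow_add, ← Nat.div_div_eq_div_mul, h3, Nat.div_div_eq_div_mul]

theorem exists_block (C : Circuit ι) (r k Q : ℕ) (hQ : 0 < Q) :
    ∃ q < Q, Q * (cutSet C (q * r) r k).card ≤ 2 * C.size := by
  classical
  have hsum : ∑ q ∈ Finset.range Q, (cutSet C (q * r) r k).card ≤ 2 * C.size := by
    rw [← Finset.card_biUnion]
    · refine (Finset.card_le_univ _).trans ?_
      simp [mul_comm]
    · intro p _ q _ hpq
      simp only [Function.onFun]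
      rw [Finset.disjoint_left]
      rintro ⟨g, b⟩ h1 h2
      simp only [cutSet, Finset.mem_filter, Finset.mem_univ, true_and] at h1 h2
      rcases lt_or_gt_of_ne hpq with h | h
      · exact cut_disj C r k p q h g b h1 h2
      · exact cut_disj C r k q p h g b h2 h1
  by_contra! hcon
  have : ∑ q ∈ Finset.range Q, (2 * C.size) <
      ∑ q ∈ Finset.range Q, Q * (cutSet C (q * r) r k).card :=
    Finset.sum_lt_sum_of_nonempty (by simpa using hQ.ne') (fun q hq => hcon q (by simpa using hq))
  rw [Finset.sum_const, Finset.card_range, smul_eq_mul, ← Finset.mul_sum] at this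
  exact absurd (Nat.mul_le_mul_left Q hsum) (not_le.2 this)

end CNF

set_option maxHeartbeats 2000000 in
/-- for all constants `c, d > 0` and every constant `ε > 0`,
there is a constant `K` such that every `B₂`-circuit with `n ≥ 4` inputs, size
at most `c·n` and depth at most `d·log₂ n` computing `f` can be converted into
a nondeterministic formula with `n` actual inputs, at most
`K·n / log₂ log₂ n` guess inputs, and size at most `K·n^(1+ε)`, computing `f`. -/
theorem circuit_to_nondeterministic_formula (c d ε : ℝ)
    (hc : 0 < c) (hd : 0 < d) (hε : 0 < ε) :
    ∃ K : ℝ, ∀ (n : ℕ), 4 ≤ n → ∀ (f : (Fin n → Bool) → Bool)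
      (C : Circuit (Fin n)),
      (C.size : ℝ) ≤ c * n → (C.depth : ℝ) ≤ d * Real.logb 2 n →
      C.Computes f →
      ∃ (m : ℕ) (F : Formula (Fin n ⊕ Fin m)),
        (m : ℝ) ≤ K * n / Real.logb 2 (Real.logb 2 n) ∧
        (F.size : ℝ) ≤ K * (n : ℝ) ^ (1 + ε : ℝ) ∧
        ∀ x : Fin n → Bool,
          f x = true ↔ ∃ y : Fin m → Bool, F.eval (Sum.elim x y) = true := by
  obtain ⟨r, hr⟩ := pow_unbounded_of_one_lt (2 * (d + 1) / ε) (one_lt_two : (1:ℝ) < 2)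
  -- make `r` positive
  obtain ⟨r, hr0, hr⟩ : ∃ r : ℕ, 0 < r ∧ 2 * (d + 1) ≤ 2 ^ r * ε := by
    refine ⟨r + 1, by omega, ?_⟩
    rw [div_lt_iff₀ hε] at hr
    have : (0:ℝ) < 2 ^ r * ε := by positivity
    rw [pow_succ]
    linarith
  refine ⟨4 * r * c + 6 * c + 1 + 2 ^ 2 ^ r, ?_⟩
  intro n hn f C hs hdep hf
  have hn' : (4:ℝ) ≤ n := by exact_mod_cast hn
  set L := Real.logb 2 n with hL
  have hL2 : 2 ≤ L := by
    rw [hL, Real.le_logb_iff_rpow_le (by norm_num) (by linarith)]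
    norm_num; exact_mod_cast hn
  have hLL : 1 ≤ Real.logb 2 L := by
    rw [Real.le_logb_iff_rpow_le (by norm_num) (by linarith)]
    simpa using hL2
  set LL := Real.logb 2 L with hLLdef
  set N := ⌊(d + 1) * L⌋₊ with hN
  have hNpos : N ≠ 0 := by
    have : 1 ≤ N := by
      rw [hN, Nat.one_le_floor_iff]; nlinarith
    omega
  set k := Nat.log 2 N + 1 with hk
  have hNk : N < 2 ^ k := Nat.lt_pow_succ_log_self (by norm_num) N
  have hkN : 2 ^ k ≤ 2 * N := by
    rw [hk, pow_succ]
    have := Nat.pow_log_le_self 2 hNpos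
    omega
  have hNle : (N:ℝ) ≤ (d + 1) * L := Nat.floor_le (by nlinarith)
  have hkL : (2:ℝ) ^ k ≤ 2 * ((d + 1) * L) := by
    have : ((2 ^ k : ℕ) : ℝ) ≤ ((2 * N : ℕ) : ℝ) := by exact_mod_cast hkN
    push_cast at this
    linarith
  have hDk : C.depth < 2 ^ k := by
    refine lt_of_le_of_lt ?_ hNk
    rw [hN]
    apply Nat.le_floor
    nlinarith
  have hkLL : LL ≤ k := by
    rw [hLLdef, Real.logb_le_iff_le_rpow (by norm_num) (by linarith), Real.rpow_natCast]
    have h1 : (d + 1) * L < N + 1 := Nat.lt_floor_add_one _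
    have h2 : (N:ℝ) + 1 ≤ 2 ^ k := by exact_mod_cast hNk
    nlinarith
  have hnε : (1:ℝ) ≤ (n:ℝ) ^ ε := Real.one_le_rpow (by linarith) hε.le
  have hn1 : (n:ℝ) ^ (1 + ε : ℝ) = n * (n:ℝ) ^ ε := by
    rw [Real.rpow_add (by linarith), Real.rpow_one]
  have hr' : (1:ℝ) ≤ r := by exact_mod_cast hr0
  have hP : (0:ℝ) < 2 ^ 2 ^ r := by positivity
  have hrc : 0 < (r:ℝ) * c := by positivity
  have hev : ∀ x, f x = true ↔ C.eval x = true := fun x => by rw [hf x]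
  rcases lt_or_ge k r with hkr | hkr
  · obtain ⟨F, hFs, hF⟩ := CNF.build C 0 0 k (by omega) hDk
    have h0 : (CNF.cutSet C 0 0 k).card = 0 := by
      rw [Finset.card_eq_zero]
      ext ⟨g, b⟩
      simp [CNF.cutSet, CNF.cut]
    refine ⟨_, F, ?_, ?_, fun x => (hev x).trans (hF x)⟩
    · rw [h0]; push_cast; positivity
    · have hFs : F.size ≤ 0 * (2 ^ 2 ^ (k - 0) + 1) + 2 ^ 2 ^ (k - 0) := by
        refine hFs.trans_eq ?_
        rw [h0]
      have h1 : F.size ≤ 2 ^ 2 ^ r := by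
        refine hFs.trans ?_
        rw [zero_mul, zero_add, Nat.sub_zero]
        exact Nat.pow_le_pow_right (by norm_num) (Nat.pow_le_pow_right (by norm_num) hkr.le)
      have h2 : (F.size : ℝ) ≤ 2 ^ 2 ^ r := by exact_mod_cast h1
      have h3 : (1:ℝ) ≤ (n:ℝ) ^ (1 + ε : ℝ) := Real.one_le_rpow (by linarith) (by linarith)
      nlinarith
  · set Q := k / r with hQ
    have hQ0 : 0 < Q := Nat.div_pos hkr hr0
    obtain ⟨q, hq, hcard⟩ := CNF.exists_block C r k Q hQ0
    have hqr : q * r + r ≤ k := by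
      have h1 : Q * r ≤ k := Nat.div_mul_le_self k r
      nlinarith
    obtain ⟨F, hFs, hF⟩ := CNF.build C (q * r) r k hqr hDk
    refine ⟨_, F, ?_, ?_, fun x => (hev x).trans (hF x)⟩
    all_goals
      generalize (CNF.cutSet C (q * r) r k).card = M at *
    · have h1 : k < (Q + 1) * r := by
        rw [mul_comm]; exact Nat.lt_mul_div_succ k hr0
      have h2 : k ≤ 2 * r * Q := by nlinarith
      have h3 : k * M ≤ 4 * r * C.size := by
        calc k * M ≤ 2 * r * Q * M := Nat.mul_le_mul_right _ h2
          _ = 2 * r * (Q * M) := by ring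
          _ ≤ 2 * r * (2 * C.size) := Nat.mul_le_mul_left _ hcard
          _ = _ := by ring
      have h4 : (k:ℝ) * M ≤ 4 * r * C.size := by exact_mod_cast h3
      rw [le_div_iff₀ (by linarith)]
      have h5 : (M:ℝ) * LL ≤ k * M := by
        rw [mul_comm]; exact mul_le_mul_of_nonneg_right hkLL (by positivity)
      have h6 : 4 * r * (C.size:ℝ) ≤ 4 * r * (c * n) := by gcongr
      have h7 : 0 ≤ (6 * c + 1 + 2 ^ 2 ^ r) * (n:ℝ) := by positivity
      nlinarith
    · have hB : ((2:ℝ) ^ 2 ^ (k - r)) ≤ (n:ℝ) ^ ε := by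
        have h1 : (2:ℝ) ^ (k - r) ≤ ε * L := by
          have h2 : (2:ℝ) ^ (k - r) * 2 ^ r = 2 ^ k := by
            rw [← pow_add]; congr 1; omega
          have h3 : (0:ℝ) < 2 ^ r := by positivity
          have h4 : (2:ℝ) ^ (k - r) * 2 ^ r ≤ (ε * L) * 2 ^ r := by
            rw [h2]
            nlinarith
          exact le_of_mul_le_mul_right h4 h3
        have h5 : (n:ℝ) = 2 ^ L := by
          rw [hL, Real.rpow_logb (by norm_num) (by norm_num) (by linarith)]
        rw [h5, ← Real.rpow_mul (by norm_num), ← Real.rpow_natCast]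
        apply Real.rpow_le_rpow_of_exponent_le (by norm_num)
        push_cast
        linarith
      have hM : (M:ℝ) ≤ 2 * (c * n) := by
        have h1 : M ≤ 2 * C.size := by nlinarith
        have h2 : (M:ℝ) ≤ 2 * C.size := by exact_mod_cast h1
        linarith
      have h1 : (F.size : ℝ) ≤ M * (2 ^ 2 ^ (k - r) + 1) + 2 ^ 2 ^ (k - r) := by
        exact_mod_cast hFs
      rw [hn1]
      set P := (n:ℝ) ^ ε with hPdef
      have h2 : (M:ℝ) * (2 ^ 2 ^ (k - r) + 1) ≤ 2 * (c * n) * (P + P) := by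
        apply mul_le_mul hM _ (by positivity) (by positivity)
        linarith
      have h3 : P ≤ n * P := by nlinarith
      have h4 : 0 ≤ (4 * r * c + 2 * c + 2 ^ 2 ^ r) * ((n:ℝ) * P) := by positivity
      calc (F.size : ℝ) ≤ 2 * (c * n) * (P + P) + n * P := by linarith
        _ ≤ 2 * (c * n) * (P + P) + n * P + (4 * r * c + 2 * c + 2 ^ 2 ^ r) * ((n:ℝ) * P) :=
          le_add_of_nonneg_right h4
        _ = _ := by ring
end
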